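/- arXiv:1601.03179 — 11 statements merged into one kernel-verified Lean document; each statement's English description precedes it below -/
import Mathlib

section
/- For every x ∈ [0,1], the double integral ∫_{[0,1]²} f_{(y,z)}(x) d(y,z) equals φ(x), where φ(x) = −8[(1−x)·ln(1−x) + x·(1−ln 2)] for x ∈ [0,1/2] and φ(x) = −8[x·ln x + (1−x)·(1−ln 2)] for x ∈ [1/2,1]. -/
open MeasureTheory Real

/-- The symmetric triangular density on `[0,1]` with support endpoints `y` and `z`. -/
noncomputable def triDens (y z x : ℝ) : ℝ :=
  (2 / |y - z|) * max 0 (1 - (2 / |y - z|) * |x - (y + z) / 2|)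

lemma tri_aux_eq (x y z : ℝ) (hy : y < x) (hz : x < z) :
    triDens y z x = 4 * min (x - y) (z - x) / (z - y) ^ 2 := by
  have hw : 0 < z - y := by linarith
  unfold triDens
  rw [abs_sub_comm y z, abs_of_pos hw]
  rcases le_total (x - y) (z - x) with h | h
  · rw [min_eq_left h, abs_of_nonpos (by linarith), max_eq_right]
    · field_simp; ring
    · have : 1 - 2 / (z - y) * -(x - (y + z) / 2) = 2 * (x - y) / (z - y) := by
        field_simp; ring
      rw [this]; apply div_nonneg <;> linarith
  · rw [min_eq_right h, abs_of_nonneg (by linarith), max_eq_right]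
    · field_simp; ring
    · have : 1 - 2 / (z - y) * (x - (y + z) / 2) = 2 * (z - x) / (z - y) := by
        field_simp; ring
      rw [this]; apply div_nonneg <;> linarith

lemma tri_aux_symm (x y z : ℝ) : triDens y z x = triDens z y x := by
  unfold triDens
  rw [abs_sub_comm y z, add_comm y z]

lemma tri_aux_zero' (x y z : ℝ) (hyz : y ≤ z) (h : x ≤ y ∨ z ≤ x) : triDens y z x = 0 := by
  unfold triDens
  rcases hyz.eq_or_lt with rfl | hlt
  · simp
  have hw : 0 < z - y := by linarith
  rw [abs_sub_comm y z, abs_of_pos hw, max_eq_left, mul_zero]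
  have h1 : (z - y) / 2 ≤ |x - (y + z) / 2| := by
    rcases h with h | h
    · rw [abs_of_nonpos (by linarith)]; linarith
    · rw [abs_of_nonneg (by linarith)]; linarith
  have h2 : 2 / (z - y) * ((z - y) / 2) = 1 := by field_simp
  have h3 : 2 / (z - y) * ((z - y) / 2) ≤ 2 / (z - y) * |x - (y + z) / 2| := by gcongr
  linarith

lemma tri_aux_ind (x : ℝ) (p : ℝ × ℝ) (hp : p ∈ Set.Icc (0 : ℝ) 1 ×ˢ Set.Icc (0 : ℝ) 1) :
    triDens p.1 p.2 x =
      (Set.Ico 0 x ×ˢ Set.Ioc x 1).indicator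
        (fun p : ℝ × ℝ => 4 * min (x - p.1) (p.2 - x) / (p.2 - p.1) ^ 2) p
      + (Set.Ico 0 x ×ˢ Set.Ioc x 1).indicator
        (fun p : ℝ × ℝ => 4 * min (x - p.1) (p.2 - x) / (p.2 - p.1) ^ 2) p.swap := by
  obtain ⟨y, z⟩ := p
  simp only [Set.mem_prod, Set.mem_Icc] at hp
  obtain ⟨⟨h1, h2⟩, h3, h4⟩ := hp
  simp only [Set.indicator, Set.mem_prod, Set.mem_Ico, Set.mem_Ioc, Prod.swap]
  by_cases hA : y < x ∧ x < z
  · rw [if_pos (by grind), if_neg (by grind), tri_aux_eq x y z hA.1 hA.2, add_zero]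
  by_cases hB : z < x ∧ x < y
  · rw [if_neg (by grind), if_pos (by grind), tri_aux_symm, tri_aux_eq x z y hB.1 hB.2, zero_add]
  rw [if_neg (by grind), if_neg (by grind), add_zero]
  rcases le_total y z with h | h
  · exact tri_aux_zero' x y z h (by grind)
  · rw [tri_aux_symm]; exact tri_aux_zero' x z y h (by grind)

lemma tri_aux_cont (x y : ℝ) (hy : y < x) :
    ContinuousOn (fun z => 4 * min (x - y) (z - x) / (z - y) ^ 2) (Set.Ici x) := by
  apply ContinuousOn.div (by fun_prop) (by fun_prop)
  intro z hz
  have : (x : ℝ) ≤ z := hz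
  have : 0 < z - y := by linarith
  positivity

lemma tri_aux_inner (x y : ℝ) (hx : x ≤ 1 / 2) (hy0 : 0 ≤ y) (hy : y < x) :
    ∫ z in Set.Ioc x 1, 4 * min (x - y) (z - x) / (z - y) ^ 2
      = 4 * (Real.log 2 - 1) + 4 * (1 - x) * (1 - y)⁻¹ := by
  rw [← intervalIntegral.integral_of_le (by linarith)]
  have hc := tri_aux_cont x y hy
  rw [← intervalIntegral.integral_add_adjacent_intervals (b := 2 * x - y)
    ((hc.mono (fun z hz => by
      rw [Set.uIcc_of_le (by linarith)] at hz; exact hz.1)).intervalIntegrable)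
    ((hc.mono (fun z hz => by
      rw [Set.uIcc_of_le (by linarith)] at hz
      exact le_trans (by linarith) hz.1)).intervalIntegrable)]
  have e1 : ∫ z in x..(2 * x - y), 4 * min (x - y) (z - x) / (z - y) ^ 2
      = 4 * (Real.log 2 - 1 / 2) := by
    rw [intervalIntegral.integral_eq_sub_of_hasDerivAt
      (f := fun z => 4 * (Real.log (z - y) + (x - y) * (z - y)⁻¹))]
    · have : 2 * x - y - y = 2 * (x - y) := by ring
      have h0 : x - y ≠ 0 := by linarith
      simp only [this]
      rw [Real.log_mul two_ne_zero h0]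
      field_simp; ring
    · intro z hz
      rw [Set.uIcc_of_le (by linarith)] at hz
      have h0 : z - y ≠ 0 := by linarith [hz.1]
      rw [min_eq_right (by linarith [hz.2])]
      have hd : HasDerivAt (fun z : ℝ => z - y) 1 z := (hasDerivAt_id z).sub_const y
      refine HasDerivAt.congr_deriv (((hd.log h0).add ((hd.inv h0).const_mul (x - y))).const_mul 4) ?_
      field_simp; ring
    · exact (hc.mono (fun z hz => by
        rw [Set.uIcc_of_le (by linarith)] at hz; exact hz.1)).intervalIntegrable
  have e2 : ∫ z in (2 * x - y)..1, 4 * min (x - y) (z - x) / (z - y) ^ 2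
      = 2 - 4 * (x - y) * (1 - y)⁻¹ := by
    rw [intervalIntegral.integral_eq_sub_of_hasDerivAt
      (f := fun z => (-4 * (x - y)) * (z - y)⁻¹)]
    · have : 2 * x - y - y = 2 * (x - y) := by ring
      have h0 : x - y ≠ 0 := by linarith
      have h1 : 1 - y ≠ 0 := by linarith
      simp only [this]
      field_simp; ring
    · intro z hz
      rw [Set.uIcc_of_le (by linarith)] at hz
      have h0 : z - y ≠ 0 := by linarith [hz.1]
      rw [min_eq_left (by linarith [hz.1])]
      have hd : HasDerivAt (fun z : ℝ => z - y) 1 z := (hasDerivAt_id z).sub_const y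
      refine HasDerivAt.congr_deriv ((hd.inv h0).const_mul (-4 * (x - y))) ?_
      field_simp
    · exact (hc.mono (fun z hz => by
        rw [Set.uIcc_of_le (by linarith)] at hz
        exact le_trans (by linarith) hz.1)).intervalIntegrable
  rw [e1, e2]
  have h1 : 1 - y ≠ 0 := by linarith
  field_simp; ring

lemma tri_aux_contG (x : ℝ) (hx : x ≤ 1 / 2) :
    ContinuousOn (fun y => 4 * (Real.log 2 - 1) + 4 * (1 - x) * (1 - y)⁻¹) (Set.Icc 0 x) := by
  apply ContinuousOn.add (by fun_prop)
  apply ContinuousOn.mul (by fun_prop)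
  apply ContinuousOn.inv₀ (by fun_prop)
  intro y hy
  linarith [hy.2]

lemma tri_aux_int (x : ℝ) (hx : x ≤ 1 / 2) :
    IntegrableOn (fun p : ℝ × ℝ => 4 * min (x - p.1) (p.2 - x) / (p.2 - p.1) ^ 2)
      (Set.Ico 0 x ×ˢ Set.Ioc x 1) := by
  unfold IntegrableOn
  rw [Measure.volume_eq_prod, ← Measure.prod_restrict, integrable_prod_iff]
  · constructor
    · refine (ae_restrict_iff' measurableSet_Ico).2 (Filter.Eventually.of_forall ?_)
      intro y hy
      refine IntegrableOn.mono_set (t := Set.Icc x 1) ?_ Set.Ioc_subset_Icc_self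
      exact ((tri_aux_cont x y hy.2).mono Set.Icc_subset_Ici_self).integrableOn_Icc
    · have hG : IntegrableOn (fun y => 4 * (Real.log 2 - 1) + 4 * (1 - x) * (1 - y)⁻¹)
          (Set.Ico 0 x) :=
        (tri_aux_contG x hx).integrableOn_Icc.mono_set Set.Ico_subset_Icc_self
      refine hG.congr_fun ?_ measurableSet_Ico
      intro y hy
      simp only
      rw [← tri_aux_inner x y hx hy.1 hy.2]
      refine setIntegral_congr_fun measurableSet_Ioc ?_
      intro z hz
      simp only
      rw [Real.norm_of_nonneg]
      have : 0 ≤ min (x - y) (z - x) := le_min (by linarith [hy.2]) (by linarith [hz.1])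
      positivity
  · apply Measurable.aestronglyMeasurable
    fun_prop

lemma tri_aux_val (x : ℝ) (hx0 : 0 ≤ x) (hx : x ≤ 1 / 2) :
    ∫ p in Set.Ico 0 x ×ˢ Set.Ioc x 1,
      (fun p : ℝ × ℝ => 4 * min (x - p.1) (p.2 - x) / (p.2 - p.1) ^ 2) p
      = 4 * (Real.log 2 - 1) * x - 4 * (1 - x) * Real.log (1 - x) := by
  have hi := tri_aux_int x hx
  rw [Measure.volume_eq_prod] at hi ⊢
  rw [setIntegral_prod _ hi]
  rw [setIntegral_congr_fun (g := fun y => 4 * (Real.log 2 - 1) + 4 * (1 - x) * (1 - y)⁻¹)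
    measurableSet_Ico (fun y hy => tri_aux_inner x y hx hy.1 hy.2)]
  rw [integral_Ico_eq_integral_Ioc, ← intervalIntegral.integral_of_le hx0]
  rw [intervalIntegral.integral_eq_sub_of_hasDerivAt
      (f := fun y => 4 * (Real.log 2 - 1) * y - 4 * (1 - x) * Real.log (1 - y))]
  · simp
  · intro y hy
    rw [Set.uIcc_of_le hx0] at hy
    have h0 : 1 - y ≠ 0 := by linarith [hy.2]
    have hd : HasDerivAt (fun y : ℝ => 1 - y) (-1) y := (hasDerivAt_id y).const_sub 1
    refine HasDerivAt.congr_deriv (((hasDerivAt_id y).const_mul (4 * (Real.log 2 - 1))).sub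
      ((hd.log h0).const_mul (4 * (1 - x)))) ?_
    field_simp; ring
  · apply ContinuousOn.intervalIntegrable
    rw [Set.uIcc_of_le hx0]
    exact tri_aux_contG x hx

lemma tri_aux_main (x : ℝ) (hx0 : 0 ≤ x) (hx : x ≤ 1 / 2) :
    ∫ p in Set.Icc (0 : ℝ) 1 ×ˢ Set.Icc (0 : ℝ) 1, triDens p.1 p.2 x =
        -8 * ((1 - x) * Real.log (1 - x) + x * (1 - Real.log 2)) := by
  have hS : MeasurableSet (Set.Icc (0 : ℝ) 1 ×ˢ Set.Icc (0 : ℝ) 1) :=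
    measurableSet_Icc.prod measurableSet_Icc
  have hR : MeasurableSet (Set.Ico 0 x ×ˢ Set.Ioc x 1) := measurableSet_Ico.prod measurableSet_Ioc
  rw [setIntegral_congr_fun hS (fun p hp => tri_aux_ind x p hp)]
  set g := (Set.Ico 0 x ×ˢ Set.Ioc x 1).indicator
        (fun p : ℝ × ℝ => 4 * min (x - p.1) (p.2 - x) / (p.2 - p.1) ^ 2) with hg
  have hgi : Integrable g := (integrable_indicator_iff hR).2 (tri_aux_int x hx)
  have hgi' : IntegrableOn g (Set.Icc (0 : ℝ) 1 ×ˢ Set.Icc (0 : ℝ) 1) := hgi.integrableOn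
  have hval : ∫ p in Set.Icc (0 : ℝ) 1 ×ˢ Set.Icc (0 : ℝ) 1, g p
      = 4 * (Real.log 2 - 1) * x - 4 * (1 - x) * Real.log (1 - x) := by
    rw [hg, setIntegral_indicator hR, Set.inter_eq_self_of_subset_right, tri_aux_val x hx0 hx]
    rintro ⟨y, z⟩ ⟨h1, h2⟩
    simp only [Set.mem_Ico, Set.mem_Ioc] at h1 h2
    constructor <;> constructor <;> simp only <;> linarith
  unfold IntegrableOn at hgi'
  rw [Measure.volume_eq_prod, ← Measure.prod_restrict] at hgi' hval ⊢
  have hsw := hgi'.swap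
  have e := integral_add hgi' hsw
  have e2 := integral_prod_swap (μ := volume.restrict (Set.Icc (0 : ℝ) 1))
    (ν := volume.restrict (Set.Icc (0 : ℝ) 1)) g
  simp only [Function.comp] at e
  rw [e, e2, hval]
  ring

lemma tri_aux_refl (x : ℝ) :
    ∫ p in Set.Icc (0 : ℝ) 1 ×ˢ Set.Icc (0 : ℝ) 1, triDens p.1 p.2 x =
    ∫ p in Set.Icc (0 : ℝ) 1 ×ˢ Set.Icc (0 : ℝ) 1, triDens p.1 p.2 (1 - x) := by
  have hS : MeasurableSet (Set.Icc (0 : ℝ) 1 ×ˢ Set.Icc (0 : ℝ) 1) :=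
    measurableSet_Icc.prod measurableSet_Icc
  rw [← integral_indicator hS, ← integral_indicator hS,
    ← integral_sub_left_eq_self _ (volume : Measure (ℝ × ℝ)) ((1, 1) : ℝ × ℝ)]
  congr 1
  ext ⟨y, z⟩
  have e : triDens (1 - y) (1 - z) x = triDens y z (1 - x) := by
    unfold triDens
    have h1 : |1 - y - (1 - z)| = |y - z| := by
      rw [abs_sub_comm y z]; congr 1; ring
    have h2 : |x - (1 - y + (1 - z)) / 2| = |1 - x - (y + z) / 2| := by
      rw [← abs_neg]; congr 1; ring
    rw [h1, h2]
  simp only [Set.indicator, Set.mem_prod, Set.mem_Icc, Prod.mk_sub_mk, e]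
  congr 1
  apply propext
  constructor <;> rintro ⟨⟨h1, h2⟩, h3, h4⟩ <;> refine ⟨⟨?_, ?_⟩, ?_, ?_⟩ <;> linarith


/-- The density of the intensity measure of a random symmetric triangular distribution,
whose endpoints are chosen independently and uniformly from `[0,1]`: for every
`x ∈ [0,1]`, the double integral of `f_{(y,z)}(x)` over `(y,z) ∈ [0,1]²` equals
`−8[(1−x)ln(1−x) + x(1−ln 2)]` for `x ≤ 1/2` and `−8[x ln x + (1−x)(1−ln 2)]` for
`x ≥ 1/2`. -/
theorem intensity_density_triangular (x : ℝ) (hx : x ∈ Set.Icc (0 : ℝ) 1) :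
    (x ≤ 1 / 2 →
      ∫ p in Set.Icc (0 : ℝ) 1 ×ˢ Set.Icc (0 : ℝ) 1, triDens p.1 p.2 x =
        -8 * ((1 - x) * Real.log (1 - x) + x * (1 - Real.log 2)))
    ∧ (1 / 2 ≤ x →
      ∫ p in Set.Icc (0 : ℝ) 1 ×ˢ Set.Icc (0 : ℝ) 1, triDens p.1 p.2 x =
        -8 * (x * Real.log x + (1 - x) * (1 - Real.log 2))) := by

  refine ⟨fun h => tri_aux_main x hx.1 h, fun h => ?_⟩
  rw [tri_aux_refl, tri_aux_main (1 - x) (by linarith [hx.2]) (by linarith)]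
  rw [sub_sub_cancel]
end

section
/- For every x ∈ (0,1), the function (y,z) ↦ (f_{(y,z)}(x))² is not Lebesgue-integrable on [0,1]²; that is, ∫_{[0,1]²} (f_{(y,z)}(x))² d(y,z) = ∞. In particular, the random symmetric triangular distribution with uniformly chosen endpoints has infinite second moment of its density at every interior point. -/
open MeasureTheory Real
open scoped ENNReal

lemma triDens_sq_lower (x s y z : ℝ) (hs : 0 < s) (hy : y ∈ Set.Ioo (x - s) (x - s / 2))
    (hz : z ∈ Set.Ioo (x + s / 2) (x + s)) : 1 / (4 * s ^ 2) ≤ (triDens y z x) ^ 2 := by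
  obtain ⟨hy1, hy2⟩ := hy
  obtain ⟨hz1, hz2⟩ := hz
  have hw : 0 < z - y := by linarith
  have habs : |y - z| = z - y := by rw [abs_sub_comm, abs_of_pos hw]
  have h1 : |x - (y + z) / 2| ≤ (z - y) / 2 - s / 2 := by
    rw [abs_le]; constructor <;> linarith
  have h2 : s / (z - y) ≤ 1 - (2 / (z - y)) * |x - (y + z) / 2| := by
    have h3 : (2 / (z - y)) * |x - (y + z) / 2| ≤ (2 / (z - y)) * ((z - y) / 2 - s / 2) :=
      mul_le_mul_of_nonneg_left h1 (by positivity)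
    have h4 : (2 / (z - y)) * ((z - y) / 2 - s / 2) = 1 - s / (z - y) := by
      field_simp
    linarith
  have h5 : 1 / (2 * s) ≤ triDens y z x := by
    unfold triDens
    rw [habs]
    calc 1 / (2 * s) ≤ (2 / (z - y)) * (s / (z - y)) := by
          rw [div_mul_div_comm, div_le_div_iff₀ (by positivity) (by positivity)]
          nlinarith
      _ ≤ _ := mul_le_mul_of_nonneg_left (h2.trans (le_max_right _ _)) (by positivity)
  have h6 : (1 / (2 * s)) ^ 2 ≤ (triDens y z x) ^ 2 := pow_le_pow_left₀ (by positivity) h5 2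
  calc 1 / (4 * s ^ 2) = (1 / (2 * s)) ^ 2 := by field_simp; norm_num
    _ ≤ _ := h6

/-- For every interior point `x ∈ (0,1)`, the squared triangular density
`(y,z) ↦ (f_{(y,z)}(x))²` is not Lebesgue-integrable on `[0,1]²`: its lower integral
is infinite. In particular, the random symmetric triangular distribution with
uniformly chosen endpoints has infinite second moment of its density at every
interior point. -/
theorem squared_density_not_integrable (x : ℝ) (hx : x ∈ Set.Ioo (0 : ℝ) 1) :
    ¬ IntegrableOn (fun p : ℝ × ℝ => (triDens p.1 p.2 x) ^ 2)
        (Set.Icc (0 : ℝ) 1 ×ˢ Set.Icc (0 : ℝ) 1)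
    ∧ ∫⁻ p in Set.Icc (0 : ℝ) 1 ×ˢ Set.Icc (0 : ℝ) 1,
        ENNReal.ofReal ((triDens p.1 p.2 x) ^ 2) = ∞ := by
  have key : ∫⁻ p in Set.Icc (0 : ℝ) 1 ×ˢ Set.Icc (0 : ℝ) 1,
        ENNReal.ofReal ((triDens p.1 p.2 x) ^ 2) = ∞ := by
    obtain ⟨hx0, hx1⟩ := hx
    obtain ⟨d, hd, hdx, hdx'⟩ : ∃ d : ℝ, 0 < d ∧ d ≤ x ∧ d ≤ 1 - x :=
      ⟨min x (1 - x), lt_min hx0 (by linarith), min_le_left _ _, min_le_right _ _⟩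
    let s : ℕ → ℝ := fun k => d * (1 / 2) ^ k
    have hs : ∀ k, 0 < s k := fun k => by positivity
    have hsd : ∀ k, s k ≤ d := fun k =>
      mul_le_of_le_one_right hd.le (pow_le_one₀ (by norm_num) (by norm_num))
    have hss : ∀ i j, i < j → s j ≤ s i / 2 := by
      intro i j hij
      have : ((1 : ℝ) / 2) ^ j ≤ (1 / 2) ^ (i + 1) :=
        pow_le_pow_of_le_one (by norm_num) (by norm_num) hij
      have h := mul_le_mul_of_nonneg_left this hd.le
      simp only [s]
      rw [pow_succ] at h
      linarith
    let B : ℕ → Set (ℝ × ℝ) := fun k =>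
      Set.Ioo (x - s k) (x - s k / 2) ×ˢ Set.Ioo (x + s k / 2) (x + s k)
    have hBm : ∀ k, MeasurableSet (B k) := fun k => measurableSet_Ioo.prod measurableSet_Ioo
    have hBs : (⋃ k, B k) ⊆ Set.Icc (0 : ℝ) 1 ×ˢ Set.Icc (0 : ℝ) 1 := by
      refine Set.iUnion_subset fun k => ?_
      rintro ⟨y, z⟩ ⟨⟨h1, h2⟩, ⟨h3, h4⟩⟩
      have := hs k
      have := hsd k
      simp only at h1 h2 h3 h4
      exact ⟨⟨by simp only; linarith, by simp only; linarith⟩,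
        ⟨by simp only; linarith, by simp only; linarith⟩⟩
    have hlt : ∀ i j, i < j → Disjoint (B i) (B j) := by
      intro i j hij
      rw [Set.disjoint_left]
      rintro ⟨y, z⟩ ⟨⟨_, h2⟩, _⟩ ⟨⟨h3, _⟩, _⟩
      have := hss i j hij
      simp only at h2 h3
      linarith
    have hBd : Pairwise (Function.onFun Disjoint B) := by
      intro i j hij
      rcases lt_or_gt_of_ne hij with h | h
      · exact hlt i j h
      · exact (hlt j i h).symm
    have hB : ∀ k, ENNReal.ofReal (1 / 16) ≤
        ∫⁻ p in B k, ENNReal.ofReal ((triDens p.1 p.2 x) ^ 2) := by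
      intro k
      have hk := hs k
      calc ENNReal.ofReal (1 / 16)
          = ENNReal.ofReal (1 / (4 * s k ^ 2)) * volume (B k) := by
            simp only [B]
            rw [Measure.volume_eq_prod, Measure.prod_prod, Real.volume_Ioo, Real.volume_Ioo,
              ← ENNReal.ofReal_mul (by linarith), ← ENNReal.ofReal_mul (by positivity)]
            congr 1
            field_simp
            ring
        _ = ∫⁻ p in B k, ENNReal.ofReal (1 / (4 * s k ^ 2)) := by
            rw [setLIntegral_const]
        _ ≤ _ := setLIntegral_mono' (hBm k) fun p hp =>
            ENNReal.ofReal_le_ofReal (triDens_sq_lower x (s k) p.1 p.2 hk hp.1 hp.2)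
    rw [← top_le_iff]
    calc (∞ : ℝ≥0∞) = ∑' _ : ℕ, ENNReal.ofReal (1 / 16) :=
          (ENNReal.tsum_const_eq_top_of_ne_zero (by simp)).symm
      _ ≤ ∑' k, ∫⁻ p in B k, ENNReal.ofReal ((triDens p.1 p.2 x) ^ 2) := ENNReal.tsum_le_tsum hB
      _ = ∫⁻ p in ⋃ k, B k, ENNReal.ofReal ((triDens p.1 p.2 x) ^ 2) :=
          (lintegral_iUnion hBm hBd _).symm
      _ ≤ _ := lintegral_mono_set hBs
  refine ⟨fun h => ?_, key⟩
  exact (Integrable.lintegral_lt_top h).ne key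
end

section
/- Fix γ ∈ (0,1) and let φ_γ(x) = (1−γ)^{−2} · ∫_{{(y,z)∈[0,1]²: |y−z|≥γ}} f_{(y,z)}(x) d(y,z). Then for every x ∈ [0,1/2]: (1) if x ≥ γ then φ_γ(x) = −(8/(1−γ)²)·[(1−x)·ln(1−x) + x·(1−ln 2) + γ/4]; (2) if x ≥ 1−γ and x ≤ γ/2 then φ_γ(x) = −(8/(1−γ)²)·[(1−x)·ln γ + x + (1−2x)/(2γ) − γ/2]; (3) if x ≥ 1−γ and x ≥ γ/2 then φ_γ(x) = −(8/(1−γ)²)·[−x·ln(2x) + ln γ + x + ((1−x)² + x²)/(2γ) − (3/4)γ]; (4) if x ≤ γ, x ≤ 1−γ and x ≤ γ/2 then φ_γ(x) = −(8/(1−γ)²)·[(1−x)·ln(1−x) + x − x²/(2γ)]; (5) if x ≤ γ, x ≤ 1−γ and x ≥ γ/2 then φ_γ(x) = −(8/(1−γ)²)·[(1−x)·ln(1−x) − x·ln(2x/γ) + x + x²/(2γ) − γ/4]. -/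
open MeasureTheory Real

/-- The region of admissible endpoint pairs for the restricted triangular
distributions: pairs `(y,z) ∈ [0,1]²` with `|y−z| ≥ γ`. -/
def restrictedRegion (γ : ℝ) : Set (ℝ × ℝ) :=
  {p : ℝ × ℝ | p.1 ∈ Set.Icc (0 : ℝ) 1 ∧ p.2 ∈ Set.Icc (0 : ℝ) 1 ∧ γ ≤ |p.1 - p.2|}

/-- The density `φ_γ` of the intensity measure of a random restricted symmetric
triangular distribution with parameter `γ`. -/
noncomputable def phiGamma (γ x : ℝ) : ℝ :=
  ((1 - γ) ^ 2)⁻¹ * ∫ p in restrictedRegion γ, triDens p.1 p.2 x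


/-- antiderivative -/
noncomputable def Fs (s w : ℝ) : ℝ := -(s^2/w) - 2*s*Real.log w + w

lemma hasDerivAt_Fs (s w : ℝ) (hw : 0 < w) :
    HasDerivAt (Fs s) ((s-w)^2/w^2) w := by
  unfold Fs
  have h1 := ((hasDerivAt_inv hw.ne').const_mul (s^2)).neg
  have h2 := (Real.hasDerivAt_log hw.ne').const_mul (2*s)
  have h3 := (h1.sub h2).add (hasDerivAt_id w)
  refine (h3.congr_deriv ?_).congr_of_eventuallyEq ?_
  · field_simp
    ring
  · exact Filter.Eventually.of_forall (fun t => by simp [div_eq_mul_inv])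

lemma int_sq (s a b : ℝ) (ha : 0 < a) (hab : a ≤ b) :
    ∫ w in a..b, (s-w)^2/w^2 = Fs s b - Fs s a := by
  apply intervalIntegral.integral_eq_sub_of_hasDerivAt
  · intro w hw
    rw [Set.uIcc_of_le hab] at hw
    exact hasDerivAt_Fs s w (by linarith [hw.1])
  · apply ContinuousOn.intervalIntegrable
    rw [Set.uIcc_of_le hab]
    apply ContinuousOn.div (by fun_prop) (by fun_prop)
    intro w hw
    have : 0 < w := by linarith [hw.1]
    positivity

lemma ii (g : ℝ → ℝ) (hg : Continuous g) (a b : ℝ) (ha : 0 < a) (hb : 0 < b) :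
    IntervalIntegrable (fun w => g w / w^2) volume a b := by
  apply ContinuousOn.intervalIntegrable
  apply ContinuousOn.div (by fun_prop) (by fun_prop)
  intro w hw
  have : 0 < w := lt_of_lt_of_le (lt_min ha hb) hw.1
  positivity

lemma int_J (s γ : ℝ) (hγ : 0 < γ) (hγ1 : γ < 1) (hs : s ≤ 1) :
    ∫ w in γ..1, (max 0 (s-w))^2/w^2 = Fs s (max γ s) - Fs s γ := by
  have hm : γ ≤ max γ s := le_max_left _ _
  have hm1 : max γ s ≤ 1 := max_le hγ1.le hs
  have hc : Continuous fun w : ℝ => (max 0 (s-w))^2 := by fun_prop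
  rw [← intervalIntegral.integral_add_adjacent_intervals (b := max γ s)
    (ii _ hc _ _ hγ (by linarith)) (ii _ hc _ _ (by linarith) one_pos)]
  have h2 : ∫ w in (max γ s)..1, (max 0 (s-w))^2/w^2 = ∫ w in (max γ s)..1, (0:ℝ) := by
    apply intervalIntegral.integral_congr
    intro w hw
    rw [Set.uIcc_of_le hm1] at hw
    have : s ≤ w := (le_max_right _ _).trans hw.1
    simp [max_eq_left (sub_nonpos.2 this)]
  have h1 : ∫ w in γ..(max γ s), (max 0 (s-w))^2/w^2 = ∫ w in γ..(max γ s), (s-w)^2/w^2 := by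
    rcases le_total s γ with h | h
    · rw [max_eq_left h]; simp
    · rw [max_eq_right h]
      apply intervalIntegral.integral_congr
      intro w hw
      rw [Set.uIcc_of_le h] at hw
      simp [max_eq_right (sub_nonneg.2 hw.2)]
  rw [h1, h2, int_sq _ _ _ hγ hm]
  simp

lemma int_K (s γ : ℝ) (hγ : 0 < γ) (hγ1 : γ < 1) (hs : s ≤ 1) :
    ∫ w in γ..1, (max 0 (w-s))^2/w^2 = Fs s 1 - Fs s (max γ s) := by
  have hm : γ ≤ max γ s := le_max_left _ _
  have e : ∀ w : ℝ, (max 0 (w-s))^2/w^2 = (s-w)^2/w^2 - (max 0 (s-w))^2/w^2 := by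
    intro w
    rcases le_total s w with h | h
    · rw [max_eq_right (by linarith), max_eq_left (by linarith)]; ring
    · rw [max_eq_left (by linarith), max_eq_right (by linarith)]; ring
  simp_rw [e]
  rw [intervalIntegral.integral_sub (ii (fun w => (s-w)^2) (by fun_prop) _ _ hγ one_pos)
    (ii (fun w => (max 0 (s-w))^2) (by fun_prop) _ _ hγ one_pos), int_sq _ _ _ hγ hγ1.le,
    int_J _ _ hγ hγ1 hs]
  ring

lemma hasDerivAt_pp (u : ℝ) : HasDerivAt (fun u : ℝ => (max 0 u)^2/2) (max 0 u) u := by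
  rcases lt_trichotomy u 0 with h | h | h
  · rw [max_eq_left h.le]
    refine (hasDerivAt_const u (0:ℝ)).congr_of_eventuallyEq ?_
    filter_upwards [eventually_lt_nhds h] with v hv
    simp [max_eq_left hv.le]
  · subst h
    rw [hasDerivAt_iff_isLittleO_nhds_zero]
    simp only [zero_add, max_self, smul_zero, sub_zero]
    have h1 : (fun h : ℝ => h^2) =o[nhds 0] fun h : ℝ => h := by
      simpa using (Asymptotics.isLittleO_pow_id (𝕜 := ℝ) (n := 2) (by norm_num))
    refine Asymptotics.IsBigO.trans_isLittleO ?_ h1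
    apply Asymptotics.IsBigO.of_bound 1
    refine Filter.Eventually.of_forall fun v => ?_
    rcases le_total v 0 with h | h
    · simp [max_eq_left h]
      positivity
    · simp [max_eq_right h]
      nlinarith [sq_nonneg v]
  · rw [max_eq_right h.le]
    have := ((hasDerivAt_id u).pow 2).div_const 2
    refine (this.congr_deriv (by simp)).congr_of_eventuallyEq ?_
    filter_upwards [eventually_gt_nhds h] with v hv
    simp [max_eq_right hv.le]

lemma int_pp (s b : ℝ) :
    ∫ y in (0:ℝ)..b, max 0 (s-y) = (max 0 s)^2/2 - (max 0 (s-b))^2/2 := by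
  rw [intervalIntegral.integral_comp_sub_left (fun u => max 0 u) s]
  rw [intervalIntegral.integral_eq_sub_of_hasDerivAt (fun u _ => hasDerivAt_pp u)]
  · simp
  · apply Continuous.intervalIntegrable; fun_prop

lemma tri_eq (w x y : ℝ) (hw : 0 < w) :
    triDens y (y+w) x
      = (4/w^2) * (max 0 (x-y) - 2 * max 0 (x-w/2-y) + max 0 (x-w-y)) := by
  have e : |y - (y+w)| = w := by
    rw [show y - (y+w) = -w by ring, abs_neg, abs_of_pos hw]
  unfold triDens
  rw [e]
  have e2 : ∀ t : ℝ, 2/w * max 0 t = (4/w^2) * max 0 (w/2*t) := by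
    intro t
    rcases le_total t 0 with h | h
    · rw [max_eq_left h, max_eq_left (by nlinarith)]; simp
    · rw [max_eq_right h, max_eq_right (by positivity)]; field_simp; ring
  rw [e2]
  congr 1
  rw [show w/2*(1-2/w*|x-(y+(y+w))/2|) = w/2 - |x-w/2-y| by
    rw [show x-(y+(y+w))/2 = x-w/2-y by ring]; field_simp]
  grind

lemma tri_symm (y z x : ℝ) : triDens y z x = triDens z y x := by
  unfold triDens
  rw [abs_sub_comm, add_comm]

lemma region_meas (γ : ℝ) : MeasurableSet (restrictedRegion γ) := by
  have : restrictedRegion γ = (Set.Icc (0:ℝ) 1 ×ˢ Set.Icc (0:ℝ) 1) ∩ {p : ℝ × ℝ | γ ≤ |p.1 - p.2|} := by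
    ext p
    simp only [restrictedRegion, Set.mem_ofPred_eq, Set.mem_inter_iff, Set.mem_prod]
    tauto
  rw [this]
  refine (measurableSet_Icc.prod measurableSet_Icc).inter ?_
  exact (isClosed_le (by fun_prop) (by fun_prop)).measurableSet

/-- the indicator integrand -/
noncomputable def hh (γ x : ℝ) (p : ℝ × ℝ) : ℝ :=
  (restrictedRegion γ).indicator (fun p => triDens p.1 p.2 x) p

lemma hh_int (γ x : ℝ) (hγ : 0 < γ) : Integrable (hh γ x) (volume.prod volume) := by
  have : IntegrableOn (fun p : ℝ × ℝ => triDens p.1 p.2 x) (restrictedRegion γ)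
      (volume.prod volume) := by
    have hf : (volume.prod volume : Measure (ℝ × ℝ)) (restrictedRegion γ) < ⊤ := by
      refine lt_of_le_of_lt (measure_mono (t := Set.Icc (0:ℝ) 1 ×ˢ Set.Icc (0:ℝ) 1) ?_) ?_
      · intro p hp
        exact ⟨hp.1, hp.2.1⟩
      · rw [Measure.prod_prod]; simp
    refine Measure.integrableOn_of_bounded (M := 2/γ) hf.ne ?_ ?_
    · apply Measurable.aestronglyMeasurable
      unfold triDens
      fun_prop
    · refine (ae_restrict_iff' (region_meas γ)).2 (Filter.Eventually.of_forall ?_)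
      intro p hp
      have h3 : γ ≤ |p.1 - p.2| := hp.2.2
      have h4 : 0 < |p.1 - p.2| := by linarith
      unfold triDens
      have h5 : 0 ≤ 2 / |p.1 - p.2| * |x - (p.1+p.2)/2| := by positivity
      rw [Real.norm_eq_abs, abs_of_nonneg (by positivity)]
      calc _ ≤ (2 / |p.1 - p.2|) * 1 := by
            gcongr
            exact max_le zero_le_one (by linarith)
        _ ≤ 2/γ := by
            rw [mul_one]; gcongr
  exact (integrable_indicator_iff (region_meas γ)).2 this

/-- slice -/
noncomputable def HH (γ x w : ℝ) : ℝ := ∫ y, hh γ x (y, y+w)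

lemma int_hh (γ x : ℝ) (hγ : 0 < γ) :
    ∫ p in restrictedRegion γ, triDens p.1 p.2 x = ∫ w, HH γ x w := by
  rw [← integral_indicator (region_meas γ)]
  change ∫ p, hh γ x p ∂(volume.prod volume) = _
  have mp := measurePreserving_prod_add (volume : Measure ℝ) (volume : Measure ℝ)
  have h1 := mp.integral_comp (MeasurableEquiv.shearAddRight ℝ).measurableEmbedding (hh γ x)
  have h2 := (mp.integrable_comp_emb (MeasurableEquiv.shearAddRight ℝ).measurableEmbedding).2
    (hh_int γ x hγ)
  rw [← h1]
  exact integral_prod_symm _ h2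

lemma hh_symm (γ x y z : ℝ) : hh γ x (y,z) = hh γ x (z,y) := by
  unfold hh
  have : (y,z) ∈ restrictedRegion γ ↔ (z,y) ∈ restrictedRegion γ := by
    simp only [restrictedRegion, Set.mem_ofPred_eq, abs_sub_comm y z]
    tauto
  by_cases h : (y,z) ∈ restrictedRegion γ
  · rw [Set.indicator_of_mem h, Set.indicator_of_mem (this.1 h)]
    exact tri_symm _ _ _
  · rw [Set.indicator_of_notMem h, Set.indicator_of_notMem (fun h' => h (this.2 h'))]

lemma HH_neg (γ x w : ℝ) : HH γ x (-w) = HH γ x w := by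
  unfold HH
  rw [← integral_add_right_eq_self _ w]
  congr 1
  ext y
  rw [hh_symm]
  congr 2
  ring

lemma HH_abs (γ x w : ℝ) : HH γ x |w| = HH γ x w := by
  rcases abs_choice w with h | h <;> rw [h]
  exact HH_neg _ _ _

lemma HH_zero (γ x w : ℝ) (hw : 0 < w) (h : w ∉ Set.Icc γ 1) : HH γ x w = 0 := by
  unfold HH
  rw [← integral_zero ℝ ℝ (μ := volume)]
  congr 1
  ext y
  unfold hh
  apply Set.indicator_of_notMem
  rintro ⟨h1, h2, h3⟩
  simp only [Set.mem_Icc] at h1 h2 h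
  rw [show y - (y+w) = -w by ring, abs_neg, abs_of_pos hw] at h3
  exact h ⟨h3, by linarith⟩

lemma HH_val (γ x w : ℝ) (hγ : 0 < γ) (hx0 : 0 ≤ x) (hx : x ≤ 1/2) (h : w ∈ Set.Icc γ 1) :
    HH γ x w = 2 * x^2/w^2 - (max 0 (2*x-w))^2/w^2 + 2*((max 0 (x-w))^2/w^2)
      - 2*((max 0 (w-(1-x)))^2/w^2) := by
  obtain ⟨h1, h2⟩ := h
  have hw : 0 < w := by linarith
  have e : (fun y => hh γ x (y, y+w)) = (Set.Icc 0 (1-w)).indicator (fun y =>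
      (4/w^2) * (max 0 (x-y) - 2 * max 0 (x-w/2-y) + max 0 (x-w-y))) := by
    ext y
    unfold hh
    have : (y, y+w) ∈ restrictedRegion γ ↔ y ∈ Set.Icc 0 (1-w) := by
      simp only [restrictedRegion, Set.mem_ofPred_eq, Set.mem_Icc]
      rw [show y - (y+w) = -w by ring, abs_neg, abs_of_pos hw]
      constructor
      · rintro ⟨a, b, c⟩; constructor <;> linarith
      · rintro ⟨a, b⟩; refine ⟨⟨?_, ?_⟩, ⟨?_, ?_⟩, ?_⟩ <;> linarith
    by_cases h : y ∈ Set.Icc 0 (1-w)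
    · rw [Set.indicator_of_mem h, Set.indicator_of_mem (this.2 h)]
      exact tri_eq _ _ _ hw
    · rw [Set.indicator_of_notMem h, Set.indicator_of_notMem (fun h' => h (this.1 h'))]
  unfold HH
  rw [e, integral_indicator measurableSet_Icc, integral_Icc_eq_integral_Ioc,
    ← intervalIntegral.integral_of_le (by linarith), intervalIntegral.integral_const_mul,
    intervalIntegral.integral_add, intervalIntegral.integral_sub,
    intervalIntegral.integral_const_mul, int_pp, int_pp, int_pp]
  · rw [max_eq_right hx0, max_eq_left (by linarith : x - w/2 - (1-w) ≤ 0),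
      max_eq_left (by linarith : x - w - (1-w) ≤ 0),
      show x - (1-w) = w - (1-x) by ring,
      show max 0 (2*x-w) = 2 * max 0 (x-w/2) by
        rw [mul_max_of_nonneg _ _ (by norm_num : (0:ℝ) ≤ 2)]; congr 1 <;> ring]
    field_simp
    ring
  all_goals apply Continuous.intervalIntegrable; fun_prop

lemma main_int (γ x : ℝ) (hγ : 0 < γ) (hγ1 : γ < 1) (hx0 : 0 ≤ x) (hx : x ≤ 1/2) :
    ∫ p in restrictedRegion γ, triDens p.1 p.2 x =
      2 * (2 * (x^2 * (1/γ - 1)) - (Fs (2*x) (max γ (2*x)) - Fs (2*x) γ)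
        + 2 * (Fs x (max γ x) - Fs x γ) - 2 * (Fs (1-x) 1 - Fs (1-x) (max γ (1-x)))) := by
  rw [int_hh _ _ hγ]
  rw [← integral_congr_ae (Filter.Eventually.of_forall (HH_abs γ x)), integral_comp_abs (f := HH γ x)]
  have e : ∫ w in Set.Ioi 0, HH γ x w = ∫ w in Set.Icc γ 1, HH γ x w := by
    apply setIntegral_eq_of_subset_of_forall_sdiff_eq_zero measurableSet_Ioi
    · intro w hw; exact lt_of_lt_of_le hγ hw.1
    · intro w hw; exact HH_zero _ _ _ hw.1 hw.2
  rw [e, setIntegral_congr_fun measurableSet_Icc (fun w hw => HH_val γ x w hγ hx0 hx hw),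
    integral_Icc_eq_integral_Ioc, ← intervalIntegral.integral_of_le hγ1.le]
  have i1 := ii (fun _ => 2 * x^2) (by fun_prop) γ 1 hγ one_pos
  have i2 := ii (fun w => (max 0 (2*x-w))^2) (by fun_prop) γ 1 hγ one_pos
  have i3 := (ii (fun w => (max 0 (x-w))^2) (by fun_prop) γ 1 hγ one_pos).const_mul 2
  have i4 := (ii (fun w => (max 0 (w-(1-x)))^2) (by fun_prop) γ 1 hγ one_pos).const_mul 2
  rw [intervalIntegral.integral_sub ((i1.sub i2).add i3) i4,
    intervalIntegral.integral_add (i1.sub i2) i3, intervalIntegral.integral_sub i1 i2,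
    intervalIntegral.integral_const_mul, intervalIntegral.integral_const_mul,
    int_J _ _ hγ hγ1 (by linarith), int_J _ _ hγ hγ1 (by linarith), int_K _ _ hγ hγ1 (by linarith)]
  have : ∫ w in γ..1, 2 * x^2/w^2 = 2 * (x^2 * (1/γ - 1)) := by
    have h : ∀ w ∈ Set.uIcc γ 1, HasDerivAt (fun w : ℝ => -(2*x^2) * w⁻¹) (2*x^2/w^2) w := by
      intro w hw
      rw [Set.uIcc_of_le hγ1.le] at hw
      have hw0 : w ≠ 0 := (lt_of_lt_of_le hγ hw.1).ne'
      exact ((hasDerivAt_inv hw0).const_mul _).congr_deriv (by field_simp)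
    rw [intervalIntegral.integral_eq_sub_of_hasDerivAt h i1]
    field_simp
    ring
  rw [this]

/-- Explicit formulas for the restricted intensity density `φ_γ` on `[0, 1/2]`,
in the five regimes determined by the relative position of `x` with respect to
`γ`, `1−γ` and `γ/2`. -/
theorem phiGamma_formulas (γ : ℝ) (hγ : γ ∈ Set.Ioo (0 : ℝ) 1)
    (x : ℝ) (hx : x ∈ Set.Icc (0 : ℝ) (1 / 2)) :
    (γ ≤ x →
      phiGamma γ x = -(8 / (1 - γ) ^ 2) *
        ((1 - x) * Real.log (1 - x) + x * (1 - Real.log 2) + γ / 4))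
    ∧ (1 - γ ≤ x → x ≤ γ / 2 →
      phiGamma γ x = -(8 / (1 - γ) ^ 2) *
        ((1 - x) * Real.log γ + x + (1 - 2 * x) / (2 * γ) - γ / 2))
    ∧ (1 - γ ≤ x → γ / 2 ≤ x →
      phiGamma γ x = -(8 / (1 - γ) ^ 2) *
        (-(x * Real.log (2 * x)) + Real.log γ + x
          + ((1 - x) ^ 2 + x ^ 2) / (2 * γ) - (3 / 4) * γ))
    ∧ (x ≤ γ → x ≤ 1 - γ → x ≤ γ / 2 →
      phiGamma γ x = -(8 / (1 - γ) ^ 2) *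
        ((1 - x) * Real.log (1 - x) + x - x ^ 2 / (2 * γ)))
    ∧ (x ≤ γ → x ≤ 1 - γ → γ / 2 ≤ x →
      phiGamma γ x = -(8 / (1 - γ) ^ 2) *
        ((1 - x) * Real.log (1 - x) - x * Real.log (2 * x / γ) + x
          + x ^ 2 / (2 * γ) - γ / 4)) := by
  obtain ⟨hγ, hγ1⟩ := hγ
  obtain ⟨hx0, hx1⟩ := hx
  have h1γ : (1-γ) ≠ 0 := by linarith
  have hc : 0 < 1 - x := by linarith
  have key : ∀ A : ℝ, ∫ p in restrictedRegion γ, triDens p.1 p.2 x = -8 * A →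
      phiGamma γ x = -(8 / (1 - γ) ^ 2) * A := by
    intro A h
    unfold phiGamma
    rw [h]
    field_simp
  have M := main_int γ x hγ hγ1 hx0 hx1
  refine ⟨fun h => ?_, fun h h' => ?_, fun h h' => ?_, fun h h' h'' => ?_, fun h h' h'' => ?_⟩
  · have hx : 0 < x := by linarith
    apply key
    rw [M, max_eq_right h, max_eq_right (by linarith : γ ≤ 2*x), max_eq_right (by linarith)]
    unfold Fs
    rw [Real.log_mul (by norm_num) hx.ne', Real.log_one]
    field_simp
    ring
  · apply key
    rw [M, max_eq_left (by linarith : x ≤ γ), max_eq_left (by linarith), max_eq_left (by linarith)]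
    unfold Fs
    rw [Real.log_one]
    field_simp
    ring
  · have hx : 0 < x := by linarith
    apply key
    rw [M, max_eq_left (by linarith : x ≤ γ), max_eq_right (by linarith : γ ≤ 2*x),
      max_eq_left (by linarith)]
    unfold Fs
    rw [Real.log_one]
    field_simp
    ring
  · apply key
    rw [M, max_eq_left (by linarith : x ≤ γ), max_eq_left (by linarith : 2*x ≤ γ),
      max_eq_right (by linarith)]
    unfold Fs
    rw [Real.log_one]
    field_simp
    ring
  · have hx : 0 < x := by linarith
    apply key
    rw [M, max_eq_left (by linarith : x ≤ γ), max_eq_right (by linarith : γ ≤ 2*x),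
      max_eq_right (by linarith)]
    unfold Fs
    rw [Real.log_one, Real.log_div (by positivity) hγ.ne']
    field_simp
    ring
end

section
/- Fix γ ∈ (0,1) and δ > 0. Let (y₁,z₁), (y₂,z₂) ∈ [0,1]² satisfy |y₁−z₁| ≥ γ, |y₂−z₂| ≥ γ, |y₁−y₂| ≤ δ and |z₁−z₂| ≤ δ. Then (1/2) ∫₀¹ |f_{(y₁,z₁)}(x) − f_{(y₂,z₂)}(x)| dx ≤ 2δ/γ. In other words, if the coordinates of two vectors shaping restricted symmetric triangular distributions do not differ by more than δ, then the total variation distance between the corresponding measures is at most 2δ/γ. -/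
open MeasureTheory Real

noncomputable def triT (h m x : ℝ) : ℝ := max 0 (1 - |x - m| / h) / h

lemma triT_cont (h m : ℝ) : Continuous (triT h m) := by
  unfold triT; fun_prop

lemma triT_nonneg {h : ℝ} (hh : 0 < h) (m x : ℝ) : 0 ≤ triT h m x := by
  unfold triT; positivity

lemma triDens_eq (y z x : ℝ) : triDens y z x = triT (|y - z| / 2) ((y + z) / 2) x := by
  unfold triDens triT
  rw [div_div_eq_mul_div, mul_comm, div_div_eq_mul_div, mul_div_assoc]
  congr 3
  ring

lemma triT_integral {h m p q : ℝ} (hh : 0 < h) (hp : p ≤ m - h) (hq : m + h ≤ q) :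
    ∫ x in p..q, triT h m x = 1 := by
  have I : ∀ a b, IntervalIntegrable (triT h m) volume a b :=
    fun a b => (triT_cont h m).intervalIntegrable a b
  rw [← intervalIntegral.integral_add_adjacent_intervals (I p (m - h)) (I (m - h) q),
    ← intervalIntegral.integral_add_adjacent_intervals (I (m - h) m) (I m q),
    ← intervalIntegral.integral_add_adjacent_intervals (I m (m + h)) (I (m + h) q)]
  have e1 : ∫ x in p..(m - h), triT h m x = 0 := by
    rw [intervalIntegral.integral_congr (g := fun _ => (0:ℝ))]
    · simp
    · intro x hx
      rw [Set.uIcc_of_le hp] at hx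
      have : 1 ≤ |x - m| / h := by
        rw [le_div_iff₀ hh, abs_of_nonpos (by linarith [hx.2])]; linarith [hx.2]
      simp only [triT]
      rw [max_eq_left (by linarith), zero_div]
  have e4 : ∫ x in (m + h)..q, triT h m x = 0 := by
    rw [intervalIntegral.integral_congr (g := fun _ => (0:ℝ))]
    · simp
    · intro x hx
      rw [Set.uIcc_of_le hq] at hx
      have : 1 ≤ |x - m| / h := by
        rw [le_div_iff₀ hh, abs_of_nonneg (by linarith [hx.1])]; linarith [hx.1]
      simp only [triT]
      rw [max_eq_left (by linarith), zero_div]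
  have e2 : ∫ x in (m - h)..m, triT h m x = 1 / 2 := by
    rw [intervalIntegral.integral_congr (g := fun x => (x - (m - h)) * (1 / h ^ 2))]
    · rw [intervalIntegral.integral_mul_const,
        intervalIntegral.integral_comp_sub_right (fun x => x), integral_id]
      field_simp
      ring
    · intro x hx
      rw [Set.uIcc_of_le (by linarith)] at hx
      have : |x - m| / h ≤ 1 := by
        rw [div_le_iff₀ hh, abs_of_nonpos (by linarith [hx.2])]; linarith [hx.1]
      simp only [triT]
      rw [max_eq_right (by linarith), abs_of_nonpos (by linarith [hx.2])]
      field_simp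
      ring
  have e3 : ∫ x in m..(m + h), triT h m x = 1 / 2 := by
    rw [intervalIntegral.integral_congr (g := fun x => ((m + h) - x) * (1 / h ^ 2))]
    · rw [intervalIntegral.integral_mul_const,
        intervalIntegral.integral_comp_sub_left (fun x => x), integral_id]
      field_simp
      ring
    · intro x hx
      rw [Set.uIcc_of_le (by linarith)] at hx
      have : |x - m| / h ≤ 1 := by
        rw [div_le_iff₀ hh, abs_of_nonneg (by linarith [hx.1])]; linarith [hx.2]
      simp only [triT]
      rw [max_eq_right (by linarith), abs_of_nonneg (by linarith [hx.1])]
      field_simp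
      ring
  rw [e1, e2, e3, e4]; norm_num

lemma triT_integral_le {h m : ℝ} (hh : 0 < h) : ∫ x in (0:ℝ)..1, triT h m x ≤ 1 := by
  refine le_trans ?_ (triT_integral (p := min 0 (m - h)) (q := max 1 (m + h)) hh
    (min_le_right _ _) (le_max_right _ _)).le
  apply intervalIntegral.integral_mono_interval (min_le_left _ _) (by norm_num) (le_max_left _ _)
  · exact Filter.Eventually.of_forall (fun x => triT_nonneg hh m x)
  · exact (triT_cont h m).intervalIntegrable _ _

lemma mono_shift (G : ℝ → ℝ) (hc : Continuous G) (h0 : ∀ x, 0 ≤ G x)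
    (h1 : ∀ x, G x ≤ 1) (a b d : ℝ) (hd : 0 ≤ d) :
    ∫ x in a..b, (G x - G (x - d)) ≤ d := by
  have I : ∀ a b, IntervalIntegrable G volume a b := fun a b => hc.intervalIntegrable a b
  rw [intervalIntegral.integral_sub (I _ _)
    ((by fun_prop : Continuous fun x => G (x - d)).intervalIntegrable _ _),
    intervalIntegral.integral_comp_sub_right G]
  have k1 := intervalIntegral.integral_add_adjacent_intervals (I (a - d) a) (I a b)
  have k2 := intervalIntegral.integral_add_adjacent_intervals (I (a - d) (b - d)) (I (b - d) b)
  have k3 : 0 ≤ ∫ x in (a - d)..a, G x :=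
    intervalIntegral.integral_nonneg (by linarith) (fun x _ => h0 x)
  have k4 : ∫ x in (b - d)..b, G x ≤ ∫ x in (b - d)..b, (1:ℝ) :=
    intervalIntegral.integral_mono (by linarith) (I _ _) (by simp) h1
  simp at k4
  linarith

noncomputable def rmp (x : ℝ) : ℝ := max 0 (min 1 x)

lemma rmp_cont : Continuous rmp := by unfold rmp; fun_prop

lemma rmp_mono : Monotone rmp := by
  intro a b hab; unfold rmp; gcongr

lemma hat_eq (t : ℝ) : max 0 (1 - |t|) = rmp (1 + t) - rmp t := by
  unfold rmp
  grind

lemma triT_eq {h : ℝ} (hh : 0 < h) (m x : ℝ) :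
    triT h m x = (rmp (1 + (x - m) / h) - rmp ((x - m) / h)) / h := by
  rw [← hat_eq, abs_div, abs_of_pos hh]; rfl

lemma shift_aux {h m d : ℝ} (hh : 0 < h) (hd : 0 ≤ d) :
    ∫ x in (0:ℝ)..1, |triT h m x - triT h (m + d) x| ≤ 2 * d / h := by
  have c := rmp_cont
  have r0 : ∀ x, 0 ≤ rmp x := fun x => le_max_left _ _
  have r1 : ∀ x, rmp x ≤ 1 := fun x => max_le (by norm_num) (min_le_left _ _)
  have a1 := mono_shift (fun x => rmp (1 + (x - m) / h)) (by fun_prop) (fun _ => r0 _)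
    (fun _ => r1 _) 0 1 d hd
  have a2 := mono_shift (fun x => rmp ((x - m) / h)) (by fun_prop) (fun _ => r0 _)
    (fun _ => r1 _) 0 1 d hd
  have key : ∫ x in (0:ℝ)..1, |triT h m x - triT h (m + d) x| ≤
      ∫ x in (0:ℝ)..1, ((rmp (1 + (x - m) / h) - rmp (1 + (x - d - m) / h)) +
        (rmp ((x - m) / h) - rmp ((x - d - m) / h))) / h := by
    apply intervalIntegral.integral_mono (by norm_num)
    · exact ((triT_cont h m).sub (triT_cont h (m + d))).abs.intervalIntegrable _ _
    · exact Continuous.intervalIntegrable (by fun_prop) _ _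
    · intro x
      simp only
      rw [triT_eq hh, triT_eq hh, ← sub_div, abs_div, abs_of_pos hh]
      have e : x - (m + d) = x - d - m := by ring
      rw [e]
      have l : (x - d - m) / h ≤ (x - m) / h := by gcongr; linarith
      have m1 := rmp_mono l
      have m2 := rmp_mono (add_le_add_right l 1)
      gcongr
      rw [abs_le]
      constructor <;> linarith
  rw [intervalIntegral.integral_div, intervalIntegral.integral_add
    (Continuous.intervalIntegrable (by fun_prop) _ _)
    (Continuous.intervalIntegrable (by fun_prop) _ _)] at key
  refine key.trans ?_
  gcongr
  linarith

lemma shift_le {h : ℝ} (m n : ℝ) (hh : 0 < h) :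
    ∫ x in (0:ℝ)..1, |triT h m x - triT h n x| ≤ 2 * |m - n| / h := by
  rcases le_total m n with l | l
  · have := shift_aux (m := m) hh (sub_nonneg.2 l)
    rw [abs_sub_comm, abs_of_nonneg (sub_nonneg.2 l)]
    simpa using this
  · have := shift_aux (m := n) hh (sub_nonneg.2 l)
    rw [abs_of_nonneg (sub_nonneg.2 l)]
    simp_rw [abs_sub_comm (triT h m _)]
    simpa using this

lemma scale_le {h k m : ℝ} (hk : 0 < k) (hkh : k ≤ h) (h0 : 0 ≤ m - k) (h1 : m + k ≤ 1) :
    ∫ x in (0:ℝ)..1, |triT h m x - triT k m x| ≤ 2 * (1 - k / h) := by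
  have hh : 0 < h := by linarith
  have key : ∫ x in (0:ℝ)..1, |triT h m x - triT k m x| ≤
      ∫ x in (0:ℝ)..1, (triT h m x + (1 - 2 * (k / h)) * triT k m x) := by
    have c1 := triT_cont h m
    have c2 := triT_cont k m
    apply intervalIntegral.integral_mono (by norm_num)
    · exact Continuous.intervalIntegrable (by fun_prop) _ _
    · exact Continuous.intervalIntegrable (by fun_prop) _ _
    · intro x
      simp only
      have q : k / h ≤ 1 := (div_le_one hh).2 hkh
      have n := triT_nonneg hk m x
      have p : k / h * triT k m x ≤ triT h m x := by
        have e : k / h * triT k m x = max 0 (1 - |x - m| / k) / h := by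
          unfold triT; field_simp
        rw [e]; unfold triT; gcongr
      have q' := mul_le_of_le_one_left n q
      rw [abs_le]
      constructor <;> linarith
  have c1 := triT_cont h m
  have c2 := triT_cont k m
  rw [intervalIntegral.integral_add (Continuous.intervalIntegrable (by fun_prop) _ _)
    (Continuous.intervalIntegrable (by fun_prop) _ _),
    intervalIntegral.integral_const_mul, triT_integral hk h0 h1] at key
  have := triT_integral_le (m := m) hh
  linarith

lemma tv_aux {h k m n γ δ : ℝ} (hγ : 0 < γ) (hk : 0 < k) (hkh : k ≤ h) (h0 : 0 ≤ n - k)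
    (h1 : n + k ≤ 1) (hg : γ ≤ 2 * h) (hd : |m - n| + |h - k| ≤ δ) :
    (1 / 2) * ∫ x in (0:ℝ)..1, |triT h m x - triT k n x| ≤ 2 * δ / γ := by
  have hh : 0 < h := by linarith
  have key : ∫ x in (0:ℝ)..1, |triT h m x - triT k n x| ≤
      ∫ x in (0:ℝ)..1, (|triT h m x - triT h n x| + |triT h n x - triT k n x|) := by
    have c1 := triT_cont h m
    have c2 := triT_cont k n
    have c3 := triT_cont h n
    apply intervalIntegral.integral_mono (by norm_num)
    · exact Continuous.intervalIntegrable (by fun_prop) _ _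
    · exact Continuous.intervalIntegrable (by fun_prop) _ _
    · intro x
      exact abs_sub_le _ _ _
  have c1 := triT_cont h m
  have c2 := triT_cont k n
  have c3 := triT_cont h n
  rw [intervalIntegral.integral_add (Continuous.intervalIntegrable (by fun_prop) _ _)
    (Continuous.intervalIntegrable (by fun_prop) _ _)] at key
  have s1 := shift_le m n hh
  have s2 := scale_le hk hkh h0 h1
  rw [abs_of_nonneg (sub_nonneg.2 hkh)] at hd
  have d0 : 0 ≤ δ := by linarith [abs_nonneg (m - n)]
  calc _ ≤ (|m - n| + (h - k)) / h := by
        have : (|m - n| + (h - k)) / h = 1 / 2 * (2 * |m - n| / h + 2 * (1 - k / h)) := by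
          field_simp
        rw [this]; linarith
    _ ≤ δ / h := by gcongr
    _ = 2 * δ / (2 * h) := by field_simp
    _ ≤ 2 * δ / γ := by gcongr

lemma param_le {y₁ z₁ y₂ z₂ δ : ℝ} (hy : |y₁ - y₂| ≤ δ) (hz : |z₁ - z₂| ≤ δ) :
    |(y₁ + z₁) / 2 - (y₂ + z₂) / 2| + |(|y₁ - z₁| / 2) - |y₂ - z₂| / 2| ≤ δ := by
  have e1 : |(y₁ + z₁) / 2 - (y₂ + z₂) / 2| = |(y₁ - y₂) + (z₁ - z₂)| / 2 := by
    rw [← abs_two (α := ℝ), ← abs_div, abs_two]; congr 1; ring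
  have e2 : |(|y₁ - z₁| / 2) - |y₂ - z₂| / 2| = |(|y₁ - z₁|) - (|y₂ - z₂|)| / 2 := by
    rw [← sub_div, abs_div, abs_two]
  have e3 := abs_abs_sub_abs_le (y₁ - z₁) (y₂ - z₂)
  have e4 : y₁ - z₁ - (y₂ - z₂) = (y₁ - y₂) - (z₁ - z₂) := by ring
  rw [e4] at e3
  have e5 : |(y₁ - y₂) + (z₁ - z₂)| + |(y₁ - y₂) - (z₁ - z₂)| ≤ 2 * δ := by
    rw [abs_le] at hy hz
    rcases abs_cases ((y₁ - y₂) + (z₁ - z₂)) with a | a <;>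
    rcases abs_cases ((y₁ - y₂) - (z₁ - z₂)) with b | b <;> linarith
  rw [e1, e2]; linarith

lemma supp_le {y z : ℝ} (hy : y ∈ Set.Icc (0 : ℝ) 1) (hz : z ∈ Set.Icc (0 : ℝ) 1) :
    0 ≤ (y + z) / 2 - |y - z| / 2 ∧ (y + z) / 2 + |y - z| / 2 ≤ 1 := by
  obtain ⟨a, b⟩ := hy
  obtain ⟨c, d⟩ := hz
  rcases abs_cases (y - z) with e | e <;> constructor <;> linarith

/-- If the coordinates of two endpoint pairs `(y₁,z₁)` and `(y₂,z₂)`, each shaping a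
restricted symmetric triangular distribution with parameter `γ`, do not differ by
more than `δ`, then the total variation distance between the corresponding measures
is at most `2δ/γ`. -/
theorem tv_dist_le_of_close_endpoints (γ δ : ℝ) (hγ : γ ∈ Set.Ioo (0 : ℝ) 1)
    (hδ : 0 < δ) (y₁ z₁ y₂ z₂ : ℝ)
    (hy₁ : y₁ ∈ Set.Icc (0 : ℝ) 1) (hz₁ : z₁ ∈ Set.Icc (0 : ℝ) 1)
    (hy₂ : y₂ ∈ Set.Icc (0 : ℝ) 1) (hz₂ : z₂ ∈ Set.Icc (0 : ℝ) 1)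
    (h₁ : γ ≤ |y₁ - z₁|) (h₂ : γ ≤ |y₂ - z₂|)
    (hy : |y₁ - y₂| ≤ δ) (hz : |z₁ - z₂| ≤ δ) :
    (1 / 2) * ∫ x in (0 : ℝ)..1, |triDens y₁ z₁ x - triDens y₂ z₂ x| ≤ 2 * δ / γ := by
  simp_rw [triDens_eq]
  have hp := param_le hy hz
  obtain ⟨u1, v1⟩ := supp_le hy₁ hz₁
  obtain ⟨u2, v2⟩ := supp_le hy₂ hz₂
  have g := hγ.1
  rcases le_total |y₂ - z₂| |y₁ - z₁| with l | l
  · exact tv_aux g (by linarith) (by linarith) u2 v2 (by linarith) hp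
  · simp_rw [abs_sub_comm (triT (|y₁ - z₁| / 2) _ _)]
    refine tv_aux g (by linarith) (by linarith) u1 v1 (by linarith) ?_
    rw [abs_sub_comm, abs_sub_comm (|y₂ - z₂| / 2)]
    exact hp
end

section
/- Fix μ ∈ (0,1/2]. Every SAD-profile achievable from the initial profile δ₀ by finitely many elementary updates is unimodal: there exists a vertex m ∈ ℤ such that the profile is nondecreasing on {v ∈ ℤ : v ≤ m} and nonincreasing on {v ∈ ℤ : v ≥ m}. -/
/-- The elementary 'Sharing a drink' update on the edge `⟨u, u+1⟩` of `ℤ` with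
convergence parameter `μ`. -/
noncomputable def sadUpdate (μ : ℝ) (u : ℤ) (ξ : ℤ → ℝ) : ℤ → ℝ := fun v =>
  if v = u then (1 - μ) * ξ u + μ * ξ (u + 1)
  else if v = u + 1 then μ * ξ u + (1 - μ) * ξ (u + 1)
  else ξ v

/-- The SAD-profile obtained from the initial profile `δ₀` by performing the
elementary updates on the edges listed in `l`, in order. -/
noncomputable def sadProfile (μ : ℝ) (l : List ℤ) : ℤ → ℝ :=
  l.foldl (fun ξ u => sadUpdate μ u ξ) (fun v => if v = 0 then 1 else 0)

def SadUni (ξ : ℤ → ℝ) (m : ℤ) : Prop :=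
  (∀ v, v < m → ξ v ≤ ξ (v + 1)) ∧ (∀ v, m ≤ v → ξ (v + 1) ≤ ξ v)

lemma sadUpdate_left (μ : ℝ) (u : ℤ) (ξ : ℤ → ℝ) :
    sadUpdate μ u ξ u = (1 - μ) * ξ u + μ * ξ (u + 1) := by simp [sadUpdate]

lemma sadUpdate_right (μ : ℝ) (u : ℤ) (ξ : ℤ → ℝ) :
    sadUpdate μ u ξ (u + 1) = μ * ξ u + (1 - μ) * ξ (u + 1) := by simp [sadUpdate]

lemma sadUpdate_other (μ : ℝ) (u : ℤ) (ξ : ℤ → ℝ) (v : ℤ) (h : v ≠ u) (h' : v ≠ u + 1) :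
    sadUpdate μ u ξ v = ξ v := by simp [sadUpdate, h, h']

lemma sadUni_of (ξ η : ℤ → ℝ) (u m m' : ℤ) (h : SadUni ξ m)
    (ho : ∀ v, v ≠ u → v ≠ u + 1 → η v = ξ v)
    (hm : ∀ v, v ≠ u - 1 → v ≠ u → v ≠ u + 1 → (v < m ↔ v < m'))
    (h1 : (u - 1 < m' → ξ (u - 1) ≤ η u) ∧ (m' ≤ u - 1 → η u ≤ ξ (u - 1)))
    (h2 : (u < m' → η u ≤ η (u + 1)) ∧ (m' ≤ u → η (u + 1) ≤ η u))
    (h3 : (u + 1 < m' → η (u + 1) ≤ ξ (u + 2)) ∧ (m' ≤ u + 1 → ξ (u + 2) ≤ η (u + 1))) :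
    SadUni η m' := by
  have e1 : u - 1 + 1 = u := by ring
  have e2 : u + 1 + 1 = u + 2 := by ring
  have o1 := ho (u - 1) (by omega) (by omega)
  have o2 := ho (u + 2) (by omega) (by omega)
  constructor <;> intro v hv
  all_goals
    by_cases a : v = u - 1
    · subst a; rw [e1, o1]; first | exact h1.1 hv | exact h1.2 hv
    by_cases b : v = u
    · subst b; first | exact h2.1 hv | exact h2.2 hv
    by_cases c : v = u + 1
    · subst c; rw [e2, o2]; first | exact h3.1 hv | exact h3.2 hv
    rw [ho v b c, ho (v + 1) (by omega) (by omega)]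
    have := hm v a b c
    first | exact h.1 v (by omega) | exact h.2 v (by omega)

lemma sadUni_update (μ : ℝ) (h0 : 0 < μ) (h1 : μ ≤ 1 / 2) (u m : ℤ) (ξ : ℤ → ℝ)
    (h : SadUni ξ m) : ∃ m', SadUni (sadUpdate μ u ξ) m' := by
  have key := fun m' => sadUni_of ξ (sadUpdate μ u ξ) u m m' h (sadUpdate_other μ u ξ)
  simp only [sadUpdate_left, sadUpdate_right] at key
  have a1 := h.1 (u - 1)
  have b1 := h.2 (u - 1)
  have a2 := h.1 u
  have b2 := h.2 u
  have a3 := h.1 (u + 1)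
  have b3 := h.2 (u + 1)
  rw [show u - 1 + 1 = u by ring] at a1 b1
  rw [show u + 1 + 1 = u + 2 by ring] at a3 b3
  clear h
  generalize ξ (u - 1) = p at *
  generalize ξ u = a at *
  generalize ξ (u + 1) = b at *
  generalize ξ (u + 2) = q at *
  rcases lt_or_ge u m with hu | hu
  · have hab := a2 hu
    have hp := a1 (by omega)
    have i1 : 0 ≤ μ * (b - a) := mul_nonneg h0.le (by linarith)
    have i2 : 0 ≤ (1 - 2 * μ) * (b - a) := mul_nonneg (by linarith) (by linarith)
    by_cases hc : m = u + 1 ∧ μ * a + (1 - μ) * b < q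
    · refine ⟨u + 2, key _ (by intros; omega) ⟨?_, ?_⟩ ⟨?_, ?_⟩ ⟨?_, ?_⟩⟩ <;> intro hh <;>
        first | (exfalso; omega) | nlinarith [hc.2]
    · refine ⟨m, key _ (by intros; rfl) ⟨?_, ?_⟩ ⟨?_, ?_⟩ ⟨?_, ?_⟩⟩ <;> intro hh
      · nlinarith
      · exfalso; omega
      · nlinarith
      · exfalso; omega
      · nlinarith [a3 hh]
      · have : m = u + 1 := by omega
        by_contra hq
        exact hc ⟨this, not_le.mp hq⟩
  · have hab := b2 hu
    have hq := b3 (by omega)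
    have i1 : 0 ≤ μ * (a - b) := mul_nonneg h0.le (by linarith)
    have i2 : 0 ≤ (1 - 2 * μ) * (a - b) := mul_nonneg (by linarith) (by linarith)
    by_cases hc : m = u ∧ (1 - μ) * a + μ * b < p
    · refine ⟨u - 1, key _ (by intros; omega) ⟨?_, ?_⟩ ⟨?_, ?_⟩ ⟨?_, ?_⟩⟩ <;> intro hh <;>
        first | (exfalso; omega) | nlinarith [hc.2]
    · refine ⟨m, key _ (by intros; rfl) ⟨?_, ?_⟩ ⟨?_, ?_⟩ ⟨?_, ?_⟩⟩ <;> intro hh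
      · have : m = u := by omega
        by_contra hq
        exact hc ⟨this, not_le.mp hq⟩
      · nlinarith [b1 hh]
      · exfalso; omega
      · nlinarith
      · exfalso; omega
      · nlinarith

lemma sadUni_foldl (μ : ℝ) (h0 : 0 < μ) (h1 : μ ≤ 1 / 2) (l : List ℤ) :
    ∀ ξ : ℤ → ℝ, (∃ m, SadUni ξ m) →
      ∃ m, SadUni (l.foldl (fun ξ u => sadUpdate μ u ξ) ξ) m := by
  induction l with
  | nil => intro ξ h; simpa using h
  | cons u l ih =>
    rintro ξ ⟨m, h⟩
    exact ih _ (sadUni_update μ h0 h1 u m ξ h)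

/-- Every achievable SAD-profile is unimodal: there is a vertex `m` such that the
profile is nondecreasing to the left of `m` and nonincreasing to the right of `m`. -/
theorem sadProfile_unimodal (μ : ℝ) (hμ : μ ∈ Set.Ioc (0 : ℝ) (1 / 2)) (l : List ℤ) :
    ∃ m : ℤ,
      (∀ v w : ℤ, v ≤ w → w ≤ m → sadProfile μ l v ≤ sadProfile μ l w)
      ∧ (∀ v w : ℤ, m ≤ v → v ≤ w → sadProfile μ l w ≤ sadProfile μ l v) := by
  obtain ⟨m, hl, hr⟩ : ∃ m, SadUni (sadProfile μ l) m := by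
    refine sadUni_foldl μ hμ.1 hμ.2 l _ ⟨0, ?_, ?_⟩
    · intro v hv
      have : v ≠ 0 := by omega
      simp only [this, if_false]
      split_ifs <;> norm_num
    · intro v hv
      have : v + 1 ≠ 0 := by omega
      simp only [this, if_false]
      split_ifs <;> norm_num
  refine ⟨m, ?_, ?_⟩
  · intro v w hvw
    induction w, hvw using Int.le_induction with
    | base => intro _; exact le_rfl
    | succ n hn ih => intro hm; exact (ih (by omega)).trans (hl n (by omega))
  · intro v w hv hvw
    induction w, hvw using Int.le_induction with
    | base => exact le_rfl
    | succ n hn ih => exact (hr n (by omega)).trans ih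
end

section
/- Fix μ ∈ (0,1/2]. Let ξ be an SAD-profile obtained from the initial profile δ₀ by a finite sequence of elementary updates none of which is performed on the edge ⟨−1,0⟩ (so vertex 0 only shares to the right). Then vertex 0 remains a mode of the profile: ξ(0) ≥ ξ(v) for every v ∈ ℤ. -/
def SadInv (ξ : ℤ → ℝ) : Prop :=
  (∀ v : ℤ, v < 0 → ξ v = 0) ∧ (∀ v : ℤ, 0 ≤ ξ v) ∧ (∀ v : ℤ, 0 ≤ v → ξ (v + 1) ≤ ξ v)

theorem SadInv.update {μ : ℝ} (h0 : 0 < μ) (h1 : μ ≤ 1 / 2) {u : ℤ} (hu : u ≠ -1)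
    {ξ : ℤ → ℝ} (h : SadInv ξ) : SadInv (sadUpdate μ u ξ) := by
  obtain ⟨hz, hn, hm⟩ := h
  refine ⟨fun v hv => ?_, fun v => ?_, fun v hv => ?_⟩
  · unfold sadUpdate
    split_ifs with h2 h3
    · rw [hz u (by omega), hz (u + 1) (by omega)]; ring
    · rw [hz u (by omega), hz (u + 1) (by omega)]; ring
    · exact hz v hv
  · unfold sadUpdate
    have a := hn u
    have b := hn (u + 1)
    have c : 0 ≤ 1 - μ := by linarith
    split_ifs with h2 h3
    · positivity
    · positivity
    · exact hn v
  · by_cases hu0 : u < 0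
    · have e1 : v ≠ u := by omega
      have e2 : v ≠ u + 1 := by omega
      have e3 : v + 1 ≠ u := by omega
      have e4 : v + 1 ≠ u + 1 := by omega
      simp only [sadUpdate, e1, e2, e3, e4, if_false]
      exact hm v hv
    · have hd := hm u (by omega)
      have hv' := hm v hv
      unfold sadUpdate
      split_ifs with h2 h3 h4 h5 h6 h7 h8 <;> first | omega | skip
      all_goals try subst_vars
      all_goals nlinarith [mul_nonneg h0.le (sub_nonneg.2 hd),
        mul_nonneg (sub_nonneg.2 h1) (sub_nonneg.2 hd)]

theorem SadInv.foldl {μ : ℝ} (h0 : 0 < μ) (h1 : μ ≤ 1 / 2) (l : List ℤ) :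
    ∀ ξ : ℤ → ℝ, (-1 : ℤ) ∉ l → SadInv ξ →
      SadInv (l.foldl (fun ξ u => sadUpdate μ u ξ) ξ) := by
  induction l with
  | nil => intro ξ _ h; exact h
  | cons u l ih =>
    intro ξ hl h
    simp only [List.mem_cons, not_or] at hl
    exact ih _ hl.2 (h.update h0 h1 (Ne.symm hl.1))

/-- If no update is ever performed on the edge `⟨−1,0⟩`, i.e. vertex `0` only shares
the water to the right, then vertex `0` remains a mode of the SAD-profile. -/
theorem sadProfile_zero_mode (μ : ℝ) (hμ : μ ∈ Set.Ioc (0 : ℝ) (1 / 2))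
    (l : List ℤ) (hl : (-1 : ℤ) ∉ l) :
    ∀ v : ℤ, sadProfile μ l v ≤ sadProfile μ l 0 := by
  have h : SadInv (sadProfile μ l) := by
    refine SadInv.foldl hμ.1 hμ.2 l _ hl ⟨fun v hv => ?_, fun v => ?_, fun v hv => ?_⟩
    · simp [hv.ne]
    · dsimp only
      split_ifs <;> norm_num
    · have e : v + 1 ≠ 0 := by omega
      simp only [e, if_false]
      split_ifs <;> norm_num
  obtain ⟨hz, hn, hm⟩ := h
  intro v
  rcases lt_or_ge v 0 with hv | hv
  · rw [hz v hv]; exact hn 0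
  · induction v, hv using Int.leInduction with
    | base => exact le_rfl
    | succ n hn' ih => exact (hm n hn').trans ih
end

section
/- Fix μ ∈ (0,1/2] and a vertex w ∈ ℤ. The supremum, over all SAD-profiles ξ achievable from the initial profile δ₀ by finitely many elementary updates, of the value ξ(w) equals 1/(d+1), where d = |w| is the graph distance on ℤ between 0 and w. -/
theorem sad_append (μ : ℝ) (l : List ℤ) (u : ℤ) :
    sadProfile μ (l ++ [u]) = sadUpdate μ u (sadProfile μ l) := by
  simp [sadProfile, List.foldl_append]

theorem sad_neg (μ : ℝ) (l : List ℤ) :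
    ∀ v, sadProfile μ (l.map (fun u => -u - 1)) v = sadProfile μ l (-v) := by
  induction l using List.reverseRecOn with
  | nil => intro v; simp [sadProfile]
  | append_singleton l u ih =>
    intro v
    rw [List.map_append, List.map_singleton, sad_append, sad_append]
    simp only [sadUpdate, ih]
    have e1 : -(-u - 1) = u + 1 := by ring
    have e2 : -(-u - 1 + 1) = u := by ring
    rw [e1, e2]
    by_cases h1 : v = -u - 1
    · have a : ¬ (-v = u) := by omega
      have b : -v = u + 1 := by omega
      simp only [if_pos h1, if_neg a, if_pos b]; ring
    · by_cases h2 : v = -u - 1 + 1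
      · have a : -v = u := by omega
        simp only [if_neg h1, if_pos h2, if_pos a]; ring
      · have a : ¬ (-v = u) := by omega
        have b : ¬ (-v = u + 1) := by omega
        simp only [if_neg h1, if_neg h2, if_neg a, if_neg b]

def SadGood (ξ : ℤ → ℝ) : Prop :=
  ∃ S : ℤ → ℝ, (∀ k, ξ k = S k - S (k + 1)) ∧ (∀ k, 0 ≤ S k) ∧
    ∀ a s : ℝ, 1 ≤ a → 0 < s →
      ∃ m : ℤ, (∀ k ≤ m, S k ≤ a - s * k) ∧ (∀ k, m < k → a - s * k ≤ S k)

theorem sadGood_init : SadGood (fun v => if v = 0 then 1 else 0) := by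
  refine ⟨fun k => if k ≤ 0 then 1 else 0, ?_, ?_, ?_⟩
  · intro k
    rcases lt_trichotomy k 0 with h | h | h
    · have h1 : k ≤ 0 := h.le
      have h2 : k + 1 ≤ 0 := h
      have h3 : k ≠ 0 := h.ne
      simp [h1, h2, h3]
    · subst h; simp
    · have h1 : ¬ k ≤ 0 := by omega
      have h2 : ¬ k + 1 ≤ 0 := by omega
      have h3 : k ≠ 0 := by omega
      simp [h1, h2, h3]
  · intro k; dsimp only; split_ifs <;> norm_num
  · intro a s ha hs
    have hf : 0 ≤ ⌊a / s⌋ := Int.floor_nonneg.2 (by positivity)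
    refine ⟨⌊a / s⌋, ?_, ?_⟩
    · intro k hk
      dsimp only
      split_ifs with h
      · have : (k : ℝ) ≤ 0 := by exact_mod_cast h
        nlinarith
      · have : (k : ℝ) ≤ a / s := Int.le_floor.1 hk
        rw [le_div_iff₀ hs] at this
        linarith
    · intro k hk
      have h : ¬ k ≤ 0 := by omega
      simp only [if_neg h]
      have : a / s < k := Int.floor_lt.1 hk
      rw [div_lt_iff₀ hs] at this
      linarith

theorem sadGood_update (μ : ℝ) (h0 : 0 < μ) (h1 : μ ≤ 1 / 2) (u : ℤ) (ξ : ℤ → ℝ)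
    (h : SadGood ξ) : SadGood (sadUpdate μ u ξ) := by
  obtain ⟨S, hS, hp, hm⟩ := h
  have hc : 0 ≤ 1 - 2 * μ := by linarith
  refine ⟨fun k => if k = u + 1 then (1 - 2 * μ) * S (u + 1) + μ * (S u + S (u + 1 + 1))
    else S k, ?_, ?_, ?_⟩
  · intro k
    simp only [sadUpdate, hS]
    by_cases e1 : k = u
    · subst e1; simp; ring
    · by_cases e2 : k = u + 1
      · subst e2; simp; ring
      · have e3 : ¬ (k + 1 = u + 1) := by omega
        simp only [if_neg e1, if_neg e2, if_neg e3]
  · intro k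
    dsimp only
    split_ifs
    · have := mul_nonneg hc (hp (u + 1))
      have := mul_nonneg h0.le (hp u)
      have := mul_nonneg h0.le (hp (u + 1 + 1))
      linarith
    · exact hp k
  · intro a s ha hs
    obtain ⟨m, hl, hr⟩ := hm a s ha hs
    set X := (1 - 2 * μ) * S (u + 1) + μ * (S u + S (u + 1 + 1)) with hX
    have key : ∀ m' : ℤ, (∀ k ≤ m', k ≠ u + 1 → k ≤ m) → (∀ k, m' < k → k ≠ u + 1 → m < k) →
        (u + 1 ≤ m' → X ≤ a - s * ((u + 1 : ℤ) : ℝ)) →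
        (m' < u + 1 → a - s * ((u + 1 : ℤ) : ℝ) ≤ X) →
        ∃ m : ℤ, (∀ k ≤ m, (if k = u + 1 then X else S k) ≤ a - s * k) ∧
          (∀ k, m < k → a - s * k ≤ (if k = u + 1 then X else S k)) := by
      intro m' q1 q2 q3 q4
      refine ⟨m', ?_, ?_⟩
      · intro k hk
        split_ifs with e
        · subst e; exact q3 hk
        · exact hl k (q1 k hk e)
      · intro k hk
        split_ifs with e
        · subst e; exact q4 hk
        · exact hr k (q2 k hk e)
    rcases lt_trichotomy (u + 1) m with c | c | c
    · refine key m (fun k hk _ => hk) (fun k hk _ => hk) (fun _ => ?_) (fun _ => by omega)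
      have := mul_le_mul_of_nonneg_left (hl (u + 1) (by omega)) hc
      have := mul_le_mul_of_nonneg_left (hl u (by omega)) h0.le
      have := mul_le_mul_of_nonneg_left (hl (u + 1 + 1) (by omega)) h0.le
      push_cast at *
      rw [hX]; linarith
    · rcases le_total X (a - s * ((u + 1 : ℤ) : ℝ)) with d | d
      · exact key m (fun k hk _ => hk) (fun k hk _ => hk) (fun _ => d) (fun _ => by omega)
      · exact key (m - 1) (fun k hk _ => by omega) (fun k hk _ => by omega)
          (fun _ => by omega) (fun _ => d)
    · by_cases c' : u = m
      · rcases le_total X (a - s * ((u + 1 : ℤ) : ℝ)) with d | d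
        · exact key (m + 1) (fun k hk _ => by omega) (fun k hk _ => by omega)
            (fun _ => d) (fun _ => by omega)
        · exact key m (fun k hk _ => hk) (fun k hk _ => hk) (fun _ => by omega) (fun _ => d)
      · refine key m (fun k hk _ => hk) (fun k hk _ => hk) (fun _ => by omega) (fun _ => ?_)
        have := mul_le_mul_of_nonneg_left (hr (u + 1) (by omega)) hc
        have := mul_le_mul_of_nonneg_left (hr u (by omega)) h0.le
        have := mul_le_mul_of_nonneg_left (hr (u + 1 + 1) (by omega)) h0.le
        push_cast at *
        rw [hX]; linarith

theorem sadGood_profile (μ : ℝ) (h0 : 0 < μ) (h1 : μ ≤ 1 / 2) (l : List ℤ) :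
    SadGood (sadProfile μ l) := by
  induction l using List.reverseRecOn with
  | nil => exact sadGood_init
  | append_singleton l u ih =>
    rw [sad_append]; exact sadGood_update μ h0 h1 u _ ih

theorem SadGood.le {ξ : ℤ → ℝ} (h : SadGood ξ) (d : ℕ) : ξ d ≤ 1 / ((d : ℝ) + 1) := by
  obtain ⟨S, hS, hp, hm⟩ := h
  by_contra! hlt
  have hd : (0 : ℝ) < (d : ℝ) + 1 := by positivity
  set s := 1 / ((d : ℝ) + 1) with hs
  have hs0 : 0 < s := by positivity
  have hs1 : s * ((d : ℝ) + 1) = 1 := by rw [hs]; field_simp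
  have hx := hS d
  have hp1 := hp (d + 1)
  obtain ⟨m, hl, hr⟩ := hm (1 + S (d + 1) + (ξ d - s) / 2) s (by linarith) hs0
  by_cases c : (d : ℤ) ≤ m
  · have := hl d c
    push_cast at this
    linarith
  · have := hr (d + 1) (by omega)
    push_cast at this
    linarith

theorem sad_sum_update (μ : ℝ) (d u : ℕ) (hu : u < d) (ξ g : ℤ → ℝ) :
    ∑ j ∈ Finset.range (d + 1), g j * sadUpdate μ u ξ j =
      ∑ j ∈ Finset.range (d + 1), g j * ξ j + μ * (ξ u - ξ (u + 1)) * (g (u + 1) - g u) := by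
  have : ∀ j ∈ Finset.range (d + 1), g j * sadUpdate μ u ξ j = g j * ξ j +
      ((if j = u then - (g u * (μ * (ξ u - ξ (u + 1)))) else 0) +
      (if j = u + 1 then (g (u + 1) * (μ * (ξ u - ξ (u + 1)))) else 0)) := by
    intro j _
    simp only [sadUpdate]
    by_cases e1 : j = u
    · subst e1; simp; ring
    · by_cases e2 : j = u + 1
      · subst e2; simp; ring
      · have e3 : ¬ ((j : ℤ) = u) := by omega
        have e4 : ¬ ((j : ℤ) = u + 1) := by omega
        simp only [if_neg e1, if_neg e2, if_neg e3, if_neg e4]; ring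
  rw [Finset.sum_congr rfl this, Finset.sum_add_distrib, Finset.sum_add_distrib,
    Finset.sum_ite_eq', Finset.sum_ite_eq', if_pos (by simp; omega), if_pos (by simp; omega)]
  ring

theorem sad_nonneg (μ : ℝ) (h0 : 0 < μ) (h1 : μ ≤ 1 / 2) (l : List ℤ) :
    ∀ v, 0 ≤ sadProfile μ l v := by
  induction l using List.reverseRecOn with
  | nil => intro v; simp only [sadProfile, List.foldl_nil]; split_ifs <;> norm_num
  | append_singleton l u ih =>
    intro v
    rw [sad_append]
    have hc : 0 ≤ 1 - μ := by linarith
    have := mul_nonneg hc (ih u)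
    have := mul_nonneg hc (ih (u + 1))
    have := mul_nonneg h0.le (ih u)
    have := mul_nonneg h0.le (ih (u + 1))
    simp only [sadUpdate]
    split_ifs
    · linarith
    · linarith
    · exact ih v

theorem sad_sum (μ : ℝ) (d : ℕ) (l : List ℕ) (hl : ∀ u ∈ l, u < d) :
    ∑ j ∈ Finset.range (d + 1), sadProfile μ (l.map (fun n : ℕ => (n : ℤ))) j = 1 := by
  induction l using List.reverseRecOn with
  | nil => simp [sadProfile]
  | append_singleton l u ih =>
    have := sad_sum_update μ d u (hl u (by simp))
      (sadProfile μ (l.map (fun n : ℕ => (n : ℤ)))) (fun _ => 1)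
    simp only [one_mul, sub_self, mul_zero, add_zero] at this
    rw [List.map_append, List.map_singleton, sad_append, this]
    exact ih (fun v hv => hl v (by simp [hv]))

theorem sad_lower (μ : ℝ) (h0 : 0 < μ) (h1 : μ ≤ 1 / 2) (d : ℕ) (δ : ℝ) (hδ : 0 < δ) :
    ∃ l : List ℤ, 1 / ((d : ℝ) + 1) - d * δ ≤ sadProfile μ l d := by
  let P : List ℕ → ℤ → ℝ := fun l => sadProfile μ (l.map (fun n : ℕ => (n : ℤ)))
  let Φ : List ℕ → ℝ := fun l => ∑ j ∈ Finset.range (d + 1), ((j : ℤ) : ℝ) * P l j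
  let A : Set ℝ := Φ '' {l | ∀ u ∈ l, u < d}
  have hne : A.Nonempty := ⟨_, [], by simp, rfl⟩
  have hbd : BddAbove A := by
    refine ⟨d, ?_⟩
    rintro _ ⟨l, hl, rfl⟩
    calc Φ l ≤ ∑ j ∈ Finset.range (d + 1), (d : ℝ) * P l j := by
          refine Finset.sum_le_sum fun j hj => ?_
          refine mul_le_mul_of_nonneg_right ?_ (sad_nonneg μ h0 h1 _ _)
          have : j ≤ d := by simp at hj; omega
          exact_mod_cast this
      _ = d := by rw [← Finset.mul_sum, sad_sum μ d l hl, mul_one]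
  obtain ⟨_, ⟨l, hl, rfl⟩, hlt⟩ := exists_lt_of_lt_csSup hne
    (show sSup A - μ * δ < sSup A by nlinarith [mul_pos h0 hδ])
  have step : ∀ u : ℕ, u < d → P l u - P l (u + 1) ≤ δ := by
    intro u hu
    have hmem : Φ (l ++ [u]) ∈ A := by
      refine ⟨_, ?_, rfl⟩
      intro v hv
      simp at hv
      rcases hv with hv | hv
      · exact hl v hv
      · omega
    have hle := le_csSup hbd hmem
    have := sad_sum_update μ d u hu (P l) (fun j => (j : ℝ))
    have e : Φ (l ++ [u]) = Φ l + μ * (P l u - P l (u + 1)) := by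
      simp only [Φ, P, List.map_append, List.map_singleton, sad_append]
      simp only [P] at this
      rw [this]; push_cast; ring
    have h2 : μ * (P l u - P l (u + 1)) < μ * δ := by linarith
    exact (lt_of_mul_lt_mul_left h2 h0.le).le
  have chain : ∀ i : ℕ, ∀ j : ℕ, j + i = d → P l j ≤ P l d + i * δ := by
    intro i
    induction i with
    | zero => intro j hj; have : j = d := by omega
              subst this; simp
    | succ i ih =>
      intro j hj
      have a := ih (j + 1) (by omega)
      have b := step j (by omega)
      push_cast at a ⊢
      linarith
  refine ⟨l.map (fun n : ℕ => (n : ℤ)), ?_⟩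
  have hs := sad_sum μ d l hl
  have hd : (0 : ℝ) < (d : ℝ) + 1 := by positivity
  have : (1 : ℝ) ≤ ∑ j ∈ Finset.range (d + 1), (P l d + d * δ) := by
    rw [← hs]
    refine Finset.sum_le_sum fun j hj => ?_
    have hj' : j ≤ d := by simp at hj; omega
    have a := chain (d - j) j (by omega)
    have b : ((d - j : ℕ) : ℝ) ≤ d := by exact_mod_cast Nat.sub_le d j
    have := mul_le_mul_of_nonneg_right b hδ.le
    exact a.trans (by linarith)
  rw [Finset.sum_const, Finset.card_range, nsmul_eq_mul] at this
  have : 1 / ((d : ℝ) + 1) ≤ P l d + d * δ := by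
    rw [div_le_iff₀ hd]; push_cast at this; linarith
  change _ ≤ P l d
  linarith

theorem sad_isLUB (μ : ℝ) (h0 : 0 < μ) (h1 : μ ≤ 1 / 2) (w : ℤ) (l : List ℤ) :
    ∃ l', sadProfile μ l' w = sadProfile μ l w.natAbs := by
  rcases Int.natAbs_eq w with h | h
  · exact ⟨l, by rw [← h]⟩
  · refine ⟨l.map (fun u => -u - 1), ?_⟩
    rw [sad_neg]; congr 1; omega

theorem sad_upper (μ : ℝ) (h0 : 0 < μ) (h1 : μ ≤ 1 / 2) (w : ℤ) (l : List ℤ) :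
    sadProfile μ l w ≤ 1 / ((w.natAbs : ℝ) + 1) := by
  rcases Int.natAbs_eq w with h | h
  · have := (sadGood_profile μ h0 h1 l).le w.natAbs
    rwa [← h] at this
  · have := (sadGood_profile μ h0 h1 (l.map (fun u => -u - 1))).le w.natAbs
    rw [sad_neg, ← h] at this
    exact this

/-- The supremum over all achievable SAD-profiles of the value at a vertex `w`
equals `1/(d+1)`, where `d = |w|` is the graph distance between `0` and `w`. -/
theorem sadProfile_sup_at_vertex (μ : ℝ) (hμ : μ ∈ Set.Ioc (0 : ℝ) (1 / 2)) (w : ℤ) :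
    (⨆ l : List ℤ, sadProfile μ l w) = 1 / ((w.natAbs : ℝ) + 1) := by
  obtain ⟨h0, h1⟩ := hμ
  apply le_antisymm
  · exact ciSup_le (sad_upper μ h0 h1 w)
  · have hb : BddAbove (Set.range fun l : List ℤ => sadProfile μ l w) :=
      ⟨_, by rintro _ ⟨l, rfl⟩; exact sad_upper μ h0 h1 w l⟩
    refine le_of_forall_pos_le_add fun ε hε => ?_
    have hd : (0 : ℝ) < (w.natAbs : ℝ) + 1 := by positivity
    obtain ⟨l, hl⟩ := sad_lower μ h0 h1 w.natAbs (ε / ((w.natAbs : ℝ) + 1)) (by positivity)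
    obtain ⟨l', hl'⟩ := sad_isLUB μ h0 h1 w l
    have a := le_ciSup hb l'
    have b : (w.natAbs : ℝ) * (ε / ((w.natAbs : ℝ) + 1)) ≤ ε := by
      rw [mul_div_assoc', div_le_iff₀ hd]; nlinarith
    simp only [hl'] at a
    linarith
end

section
/- Fix μ ∈ (0,1/2], θ > 0, N ≥ 2, and let X be a real normed vector space. Let x : {1,…,N} → X satisfy ‖x(u+1) − x(u)‖ ≤ θ/2 for all 1 ≤ u ≤ N−1. Apply elementary updates in repeated left-to-right sweeps, i.e. in the order ⟨1,2⟩, ⟨2,3⟩, …, ⟨N−1,N⟩, ⟨1,2⟩, ⟨2,3⟩, …, where an update on ⟨u,u+1⟩ replaces (x(u), x(u+1)) by ((1−μ)x(u)+μx(u+1), μx(u)+(1−μ)x(u+1)). Then after every finite number of such elementary updates, the configuration y obtained satisfies ‖y(u+1) − y(u)‖ ≤ θ for all 1 ≤ u ≤ N−1. -/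
/-- The elementary pairwise `μ`-averaging update on the edge `⟨u, u+1⟩` for a
configuration of points in a real normed vector space `X`. -/
noncomputable def pairUpdate {X : Type*} [NormedAddCommGroup X] [NormedSpace ℝ X]
    (μ : ℝ) (u : ℕ) (x : ℕ → X) : ℕ → X := fun v =>
  if v = u then (1 - μ) • x u + μ • x (u + 1)
  else if v = u + 1 then μ • x u + (1 - μ) • x (u + 1)
  else x v

/-- The configuration after `k` elementary updates, performed in repeated
left-to-right sweeps over the edges `⟨1,2⟩, ⟨2,3⟩, …, ⟨N−1,N⟩, ⟨1,2⟩, …`: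
the `k`-th update (counting from `0`) is on the edge `⟨k % (N−1) + 1, k % (N−1) + 2⟩`. -/
noncomputable def sweepSeq {X : Type*} [NormedAddCommGroup X] [NormedSpace ℝ X]
    (μ : ℝ) (N : ℕ) (x₀ : ℕ → X) : ℕ → ℕ → X
  | 0 => x₀
  | k + 1 => pairUpdate μ (k % (N - 1) + 1) (sweepSeq μ N x₀ k)

lemma pairUpdate_diff_self {X : Type*} [NormedAddCommGroup X] [NormedSpace ℝ X]
    (μ : ℝ) (e : ℕ) (x : ℕ → X) :
    pairUpdate μ e x (e + 1) - pairUpdate μ e x e = (1 - 2 * μ) • (x (e + 1) - x e) := by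
  simp [pairUpdate]
  module

lemma pairUpdate_diff_left {X : Type*} [NormedAddCommGroup X] [NormedSpace ℝ X]
    (μ : ℝ) (u : ℕ) (x : ℕ → X) :
    pairUpdate μ (u + 1) x (u + 1) - pairUpdate μ (u + 1) x u
      = (x (u + 1) - x u) + μ • (x (u + 1 + 1) - x (u + 1)) := by
  have h : u ≠ u + 1 + 1 := by omega
  simp [pairUpdate, h]
  module

lemma pairUpdate_diff_right {X : Type*} [NormedAddCommGroup X] [NormedSpace ℝ X]
    (μ : ℝ) (e : ℕ) (x : ℕ → X) :
    pairUpdate μ e x (e + 1 + 1) - pairUpdate μ e x (e + 1)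
      = (x (e + 1 + 1) - x (e + 1)) + μ • (x (e + 1) - x e) := by
  have : e + 1 + 1 ≠ e := by omega
  simp [pairUpdate, this]
  module

lemma pairUpdate_diff_far {X : Type*} [NormedAddCommGroup X] [NormedSpace ℝ X]
    (μ : ℝ) (e u : ℕ) (x : ℕ → X) (h1 : u ≠ e) (h2 : u + 1 ≠ e) (h3 : u ≠ e + 1) :
    pairUpdate μ e x (u + 1) - pairUpdate μ e x u = x (u + 1) - x u := by
  simp [pairUpdate, h1, h2, h3]

lemma sweep_inv {X : Type*} [NormedAddCommGroup X] [NormedSpace ℝ X]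
    (μ B C : ℝ) (h0 : 0 < μ) (h2 : μ ≤ 1 / 2) (hC : 0 ≤ C) (hBC : (1 - μ) * C = B)
    (N : ℕ) (hN : 2 ≤ N) (x₀ : ℕ → X)
    (hinit : ∀ u : ℕ, 1 ≤ u → u ≤ N - 1 → ‖x₀ (u + 1) - x₀ u‖ ≤ B) (k : ℕ) :
    ∀ u : ℕ, 1 ≤ u → u ≤ N - 1 →
      ‖sweepSeq μ N x₀ k (u + 1) - sweepSeq μ N x₀ k u‖ ≤
        if u = k % (N - 1) then (1 - 2 * μ) * C else if u = k % (N - 1) + 1 then C else B := by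
  have hμC : 0 ≤ μ * C := by positivity
  induction k with
  | zero =>
    intro u h1 hu
    have := hinit u h1 hu
    simp only [sweepSeq]
    rw [Nat.zero_mod]
    rw [if_neg (by omega)]
    split_ifs
    · nlinarith
    · exact this
  | succ k ih =>
    intro u h1 hu
    simp only [sweepSeq]
    generalize sweepSeq μ N x₀ k = x at ih ⊢
    have hj : k % (N - 1) < N - 1 := Nat.mod_lt _ (by omega)
    have hnext : (k + 1) % (N - 1) = if k % (N - 1) + 1 = N - 1 then 0 else k % (N - 1) + 1 := by
      rw [← Nat.mod_add_mod]
      split_ifs with h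
      · rw [h, Nat.mod_self]
      · exact Nat.mod_eq_of_lt (by omega)
    rw [hnext]
    generalize k % (N - 1) = j at *
    have hE := ih (j + 1) (by omega) (by omega)
    rw [if_neg (by omega), if_pos rfl] at hE
    have hold := ih u h1 hu
    have hmu : ∀ v : X, ‖μ • v‖ = μ * ‖v‖ := fun v => by
      rw [norm_smul, Real.norm_of_nonneg h0.le]
    have hmE : μ * ‖x (j + 1 + 1) - x (j + 1)‖ ≤ μ * C := by gcongr
    -- main bound
    have key : ‖pairUpdate μ (j + 1) x (u + 1) - pairUpdate μ (j + 1) x u‖ ≤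
        if u = j + 1 then (1 - 2 * μ) * C else if u = j + 1 + 1 then C else B := by
      by_cases ha : u = j + 1
      · subst ha
        rw [if_pos rfl, pairUpdate_diff_self, norm_smul, Real.norm_of_nonneg (by linarith)]
        exact mul_le_mul_of_nonneg_left hE (by linarith)
      by_cases hb : u = j + 1 + 1
      · subst hb
        rw [if_neg ha, if_pos rfl, pairUpdate_diff_right]
        rw [if_neg (by omega), if_neg (by omega)] at hold
        refine (norm_add_le _ _).trans ?_
        rw [hmu]
        linarith
      rw [if_neg ha, if_neg hb]
      by_cases hc : u = j
      · subst hc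
        rw [pairUpdate_diff_left]
        rw [if_pos rfl] at hold
        refine (norm_add_le _ _).trans ?_
        rw [hmu]
        linarith
      · rw [pairUpdate_diff_far _ _ _ _ ha (by omega) hb]
        rwa [if_neg hc, if_neg ha] at hold
    refine key.trans ?_
    by_cases hw : j + 1 = N - 1
    · rw [if_pos hw]
      split_ifs <;> first | omega | linarith
    · rw [if_neg hw]

/-- If neighboring opinions on the section `{1,…,N}` initially differ by at most
`θ/2`, then after every finite number of elementary updates performed in repeated
left-to-right sweeps, all neighboring differences remain at most `θ`. -/
theorem sweeps_keep_neighbors_close {X : Type*} [NormedAddCommGroup X] [NormedSpace ℝ X]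
    (μ : ℝ) (hμ : μ ∈ Set.Ioc (0 : ℝ) (1 / 2)) (θ : ℝ) (hθ : 0 < θ)
    (N : ℕ) (hN : 2 ≤ N) (x₀ : ℕ → X)
    (hinit : ∀ u : ℕ, 1 ≤ u → u ≤ N - 1 → ‖x₀ (u + 1) - x₀ u‖ ≤ θ / 2) :
    ∀ k : ℕ, ∀ u : ℕ, 1 ≤ u → u ≤ N - 1 →
      ‖sweepSeq μ N x₀ k (u + 1) - sweepSeq μ N x₀ k u‖ ≤ θ := by
  obtain ⟨h0, h2⟩ := hμ
  have hp : 0 < 1 - μ := by linarith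
  have hC : 0 ≤ θ / 2 / (1 - μ) := by positivity
  have hBC : (1 - μ) * (θ / 2 / (1 - μ)) = θ / 2 := by field_simp
  have hCθ : θ / 2 / (1 - μ) ≤ θ := by
    rw [div_le_iff₀ hp]
    nlinarith
  intro k u h1 hu
  refine (sweep_inv μ (θ / 2) _ h0 h2 hC hBC N hN x₀ hinit k u h1 hu).trans ?_
  split_ifs
  · nlinarith
  · exact hCθ
  · linarith
end

section
/- Fix μ ∈ (0,1/2] and N ≥ 1, and let X be a real normed vector space. Define the sweep map S : X^N → X^N by applying, successively for u = 1, …, N−1, the replacement of (x(u), x(u+1)) by ((1−μ)x(u)+μx(u+1), μx(u)+(1−μ)x(u+1)). Then for every x ∈ X^N and every coordinate v ∈ {1,…,N}, the iterates satisfy (S^k x)(v) → (1/N)·∑_{u=1}^N x(u) as k → ∞. In particular, repeated left-to-right sweeps bring all coordinates arbitrarily close to the (preserved) mean of the initial configuration. -/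
open Filter

/-- The sweep map: one left-to-right sweep of elementary `μ`-averaging updates over
the edges `⟨1,2⟩, ⟨2,3⟩, …, ⟨N−1,N⟩` of the path with vertices `1,…,N`. -/
noncomputable def sweep {X : Type*} [NormedAddCommGroup X] [NormedSpace ℝ X]
    (μ : ℝ) (N : ℕ) (x : ℕ → X) : ℕ → X :=
  (List.range (N - 1)).foldl (fun y i => pairUpdate μ (i + 1) y) x

section Helpers

variable {X : Type*} [NormedAddCommGroup X] [NormedSpace ℝ X]

noncomputable def partialSweep (μ : ℝ) (n : ℕ) (x : ℕ → X) : ℕ → X :=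
  (List.range n).foldl (fun y i => pairUpdate μ (i + 1) y) x

lemma partialSweep_succ (μ : ℝ) (n : ℕ) (x : ℕ → X) :
    partialSweep μ (n + 1) x = pairUpdate μ (n + 1) (partialSweep μ n x) := by
  simp [partialSweep, List.range_succ, List.foldl_append]

lemma partialSweep_gt (μ : ℝ) (n : ℕ) (x : ℕ → X) :
    ∀ u, n + 1 < u → partialSweep μ n x u = x u := by
  induction n with
  | zero => intro u _; simp [partialSweep]
  | succ n ih =>
    intro u hu
    rw [partialSweep_succ, pairUpdate, if_neg (by omega), if_neg (by omega)]
    exact ih u (by omega)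

lemma partialSweep_lower (μ : ℝ) (h0 : 0 < μ) (h1 : μ ≤ 1 / 2) (N : ℕ) (x : ℕ → X)
    (f : X →ₗ[ℝ] ℝ) (m : ℝ) (hm : ∀ u, 1 ≤ u → u ≤ N → m ≤ f (x u)) (n : ℕ) :
    n + 1 ≤ N → ∀ v, 1 ≤ v → v ≤ n + 1 →
      m + μ ^ n * (f (x 1) - m) ≤ f (partialSweep μ n x v) := by
  induction n with
  | zero =>
    intro _ v hv hv'
    obtain rfl : v = 1 := by omega
    simp [partialSweep]
  | succ n ih =>
    intro hn v hv hv'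
    have ih := ih (by omega)
    have hd : 0 ≤ f (x 1) - m := sub_nonneg.2 (hm 1 le_rfl (by omega))
    have hp : 0 ≤ μ ^ n * (f (x 1) - m) := by positivity
    have ha := ih (n + 1) (by omega) le_rfl
    have hb := hm (n + 1 + 1) (by omega) hn
    rw [partialSweep_succ, pairUpdate, pow_succ]
    have e := partialSweep_gt μ n x (n + 1 + 1) (by omega)
    split_ifs with h h'
    · rw [e, map_add, map_smul, map_smul, smul_eq_mul, smul_eq_mul]
      nlinarith
    · rw [e, map_add, map_smul, map_smul, smul_eq_mul, smul_eq_mul]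
      nlinarith
    · have := ih v hv (by omega)
      nlinarith

lemma pairUpdate_sum (μ : ℝ) (N u : ℕ) (hu : 1 ≤ u) (hu' : u + 1 ≤ N) (x : ℕ → X) :
    ∑ v ∈ Finset.Icc 1 N, pairUpdate μ u x v = ∑ v ∈ Finset.Icc 1 N, x v := by
  have h : ∀ v, pairUpdate μ u x v = x v + (if v = u then μ • (x (u + 1) - x u) else 0)
      + (if v = u + 1 then - (μ • (x (u + 1) - x u)) else 0) := by
    intro v
    unfold pairUpdate
    by_cases h1 : v = u
    · subst h1
      simp only [if_true, if_neg (show ¬ v = v + 1 by omega)]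
      module
    · by_cases h2 : v = u + 1
      · subst h2
        simp only [if_true, if_neg h1]
        module
      · simp [h1, h2]
  simp only [h, Finset.sum_add_distrib, Finset.sum_ite_eq', Finset.mem_Icc]
  rw [if_pos (by omega), if_pos (by omega)]
  abel

lemma partialSweep_sum (μ : ℝ) (N : ℕ) (x : ℕ → X) (n : ℕ) : n + 1 ≤ N →
    ∑ v ∈ Finset.Icc 1 N, partialSweep μ n x v = ∑ v ∈ Finset.Icc 1 N, x v := by
  induction n with
  | zero => intro _; simp [partialSweep]
  | succ n ih =>
    intro hn
    rw [partialSweep_succ, pairUpdate_sum _ _ _ (by omega) hn, ih (by omega)]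

lemma sweep_contract (μ : ℝ) (h0 : 0 < μ) (h1 : μ ≤ 1 / 2) (N : ℕ) (hN : 1 ≤ N) (x : ℕ → X)
    (D : ℝ) (hD : ∀ u w, 1 ≤ u → u ≤ N → 1 ≤ w → w ≤ N → ‖x u - x w‖ ≤ D) :
    ∀ u w, 1 ≤ u → u ≤ N → 1 ≤ w → w ≤ N →
      ‖sweep μ N x u - sweep μ N x w‖ ≤ (1 - μ ^ (N - 1)) * D := by
  intro u w hu hu' hw hw'
  obtain ⟨g, hg, hg'⟩ := exists_dual_vector'' ℝ (sweep μ N x u - sweep μ N x w)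
  have hne : (Finset.Icc 1 N).Nonempty := ⟨1, by simp [hN]⟩
  obtain ⟨a, ha, hma⟩ := Finset.exists_min_image (Finset.Icc 1 N) (fun v => g (x v)) hne
  obtain ⟨b, hb, hMb⟩ := Finset.exists_max_image (Finset.Icc 1 N) (fun v => g (x v)) hne
  simp only [Finset.mem_Icc] at ha hb hma hMb
  have l := partialSweep_lower μ h0 h1 N x g.toLinearMap (g (x a))
    (fun v hv hv' => hma v ⟨hv, hv'⟩) (N - 1) (by omega) w hw (by omega)
  have r := partialSweep_lower μ h0 h1 N x (-g.toLinearMap) (-g (x b))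
    (fun v hv hv' => by simpa using hMb v ⟨hv, hv'⟩) (N - 1) (by omega) u hu (by omega)
  have hgD : g (x b) - g (x a) ≤ D := by
    rw [← map_sub]
    calc g (x b - x a) ≤ ‖g (x b - x a)‖ := le_abs_self _
      _ ≤ 1 * ‖x b - x a‖ := g.le_of_opNorm_le hg _
      _ ≤ D := by rw [one_mul]; exact hD _ _ hb.1 hb.2 ha.1 ha.2
  have hp : μ ^ (N - 1) ≤ 1 := pow_le_one₀ h0.le (by linarith)
  have key : g (sweep μ N x u) - g (sweep μ N x w)
      ≤ (1 - μ ^ (N - 1)) * (g (x b) - g (x a)) := by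
    change _ ≤ g (sweep μ N x w) at l
    change _ ≤ -g (sweep μ N x u) at r
    simp only [ContinuousLinearMap.coe_coe, LinearMap.neg_apply] at l r
    linarith
  rw [map_sub] at hg'
  simp only [RCLike.ofReal_real_eq_id, id] at hg'
  rw [← hg']
  exact key.trans (mul_le_mul_of_nonneg_left hgD (by linarith))

end Helpers

/-- Repeated left-to-right sweeps bring every coordinate of the configuration
arbitrarily close to the (preserved) mean of the initial configuration: for every
vertex `v ∈ {1,…,N}`, the iterates `(S^k x)(v)` converge to `(1/N)·∑_{u=1}^N x(u)`. -/
theorem sweep_iterates_tendsto_mean {X : Type*} [NormedAddCommGroup X] [NormedSpace ℝ X]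
    (μ : ℝ) (hμ : μ ∈ Set.Ioc (0 : ℝ) (1 / 2)) (N : ℕ) (hN : 1 ≤ N) (x : ℕ → X) :
    ∀ v : ℕ, 1 ≤ v → v ≤ N →
      Tendsto (fun k => (sweep μ N)^[k] x v) atTop
        (nhds ((N : ℝ)⁻¹ • ∑ u ∈ Finset.Icc 1 N, x u)) := by
  obtain ⟨h0, h1⟩ := hμ
  intro v hv hv'
  set D : ℝ := ∑ u ∈ Finset.Icc 1 N, ∑ w ∈ Finset.Icc 1 N, ‖x u - x w‖ with hDdef
  set c : ℝ := 1 - μ ^ (N - 1) with hc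
  have hc0 : 0 ≤ c := by
    have : μ ^ (N - 1) ≤ 1 := pow_le_one₀ h0.le (by linarith)
    linarith
  have hc1 : c < 1 := by
    have : 0 < μ ^ (N - 1) := by positivity
    linarith
  have hdiam : ∀ k : ℕ, ∀ u w, 1 ≤ u → u ≤ N → 1 ≤ w → w ≤ N →
      ‖(sweep μ N)^[k] x u - (sweep μ N)^[k] x w‖ ≤ c ^ k * D := by
    intro k
    induction k with
    | zero =>
      intro u w hu hu' hw hw'
      simp only [Function.iterate_zero, id, pow_zero, one_mul]
      calc ‖x u - x w‖ ≤ ∑ w ∈ Finset.Icc 1 N, ‖x u - x w‖ :=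
            Finset.single_le_sum (f := fun w => ‖x u - x w‖) (fun _ _ => norm_nonneg _)
              (Finset.mem_Icc.2 ⟨hw, hw'⟩)
        _ ≤ D := Finset.single_le_sum (f := fun u => ∑ w ∈ Finset.Icc 1 N, ‖x u - x w‖)
              (fun _ _ => Finset.sum_nonneg fun _ _ => norm_nonneg _)
              (Finset.mem_Icc.2 ⟨hu, hu'⟩)
    | succ k ih =>
      rw [Function.iterate_succ_apply', pow_succ', mul_assoc]
      exact sweep_contract μ h0 h1 N hN _ _ ih
  have hsum : ∀ k : ℕ, ∑ u ∈ Finset.Icc 1 N, (sweep μ N)^[k] x u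
      = ∑ u ∈ Finset.Icc 1 N, x u := by
    intro k
    induction k with
    | zero => rfl
    | succ k ih =>
      rw [Function.iterate_succ_apply', ← ih]
      exact partialSweep_sum μ N _ (N - 1) (by omega)
  have hNpos : (0 : ℝ) < N := by exact_mod_cast hN
  rw [tendsto_iff_norm_sub_tendsto_zero]
  refine squeeze_zero (g := fun k => c ^ k * D) (fun _ => norm_nonneg _) (fun k => ?_) ?_
  · have e : (sweep μ N)^[k] x v - (N : ℝ)⁻¹ • ∑ u ∈ Finset.Icc 1 N, x u
        = (N : ℝ)⁻¹ • ∑ u ∈ Finset.Icc 1 N, ((sweep μ N)^[k] x v - (sweep μ N)^[k] x u) := by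
      rw [Finset.sum_sub_distrib, hsum, smul_sub, Finset.sum_const, Nat.card_Icc,
        Nat.add_sub_cancel, ← Nat.cast_smul_eq_nsmul ℝ, smul_smul, inv_mul_cancel₀ hNpos.ne',
        one_smul]
    rw [e, norm_smul, norm_inv, Real.norm_of_nonneg hNpos.le, inv_mul_le_iff₀ hNpos]
    refine (norm_sum_le_of_le _ (f := fun u => (sweep μ N)^[k] x v - (sweep μ N)^[k] x u)
      (n := fun _ => c ^ k * D) ?_).trans ?_
    · intro u hu
      rw [Finset.mem_Icc] at hu
      exact hdiam k v u hv hv' hu.1 hu.2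
    · simp
  · simpa using (tendsto_pow_atTop_nhds_zero_of_lt_one hc0 hc1).mul_const D
end

section
/- Fix γ ∈ (0,1). For every (y,z) ∈ [0,1]² with |y−z| ≥ γ, one has (1/2) ∫₀¹ |f_{(y,z)}(x) − φ_γ(x)| dx ≤ (1/2) ∫₀¹ |f_{(γ,0)}(x) − φ_γ(x)| dx. That is, among all restricted symmetric triangular distributions with parameter γ, the total variation distance to the intensity measure with density φ_γ is maximized by the triangular distribution supported on [0,γ] (equivalently, by symmetry, on [1−γ,1]). -/
open MeasureTheory Real

lemma poly_bern (u v p r : ℝ) (hu : 0 ≤ u) (hv : 0 ≤ v) (hp : 0 ≤ p) (hr : 0 ≤ r)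
    (hp1 : p = 1 - u) (hr1 : r = 1 - v) :
    3*((1-u/2)+2)*(1-v/2*(u/2))^2*(2*(1-u/2)-(1-v/2*(u/2)))^2 ≤
      (1-u/2)*(2*(1-u/2)-2+((1-u/2)+2)*(1-v/2*(u/2))^2)*(6*(1-u/2)-((1-u/2)+2)*(1-v/2*(u/2))^2) := by
  have key : (1-u/2)*(2*(1-u/2)-2+((1-u/2)+2)*(1-v/2*(u/2))^2)*(6*(1-u/2)-((1-u/2)+2)*(1-v/2*(u/2))^2)
      - 3*((1-u/2)+2)*(1-v/2*(u/2))^2*(2*(1-u/2)-(1-v/2*(u/2)))^2 = (u/2) * (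
      (6/1)*u^0*p^6*v^0*r^4 +
      (24/1)*u^0*p^6*v^1*r^3 +
      (36/1)*u^0*p^6*v^2*r^2 +
      (24/1)*u^0*p^6*v^3*r^1 +
      (6/1)*u^0*p^6*v^4*r^0 +
      (63/2)*u^1*p^5*v^0*r^4 +
      (120/1)*u^1*p^5*v^1*r^3 +
      (675/4)*u^1*p^5*v^2*r^2 +
      (207/2)*u^1*p^5*v^3*r^1 +
      (93/4)*u^1*p^5*v^4*r^0 +
      (267/4)*u^2*p^4*v^0*r^4 +
      (491/2)*u^2*p^4*v^1*r^3 +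
      (651/2)*u^2*p^4*v^2*r^2 +
      (1461/8)*u^2*p^4*v^3*r^1 +
      (287/8)*u^2*p^4*v^4*r^0 +
      (72/1)*u^3*p^3*v^0*r^4 +
      (1043/4)*u^3*p^3*v^1*r^3 +
      (2635/8)*u^3*p^3*v^2*r^2 +
      (1349/8)*u^3*p^3*v^3*r^1 +
      (1783/64)*u^3*p^3*v^4*r^0 +
      (81/2)*u^4*p^2*v^0*r^4 +
      (597/4)*u^4*p^2*v^1*r^3 +
      (5851/32)*u^4*p^2*v^2*r^2 +
      (1371/16)*u^4*p^2*v^3*r^1 +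
      (1439/128)*u^4*p^2*v^4*r^0 +
      (21/2)*u^5*p^1*v^0*r^4 +
      (169/4)*u^5*p^1*v^1*r^3 +
      (829/16)*u^5*p^1*v^2*r^2 +
      (1439/64)*u^5*p^1*v^3*r^1 +
      (1089/512)*u^5*p^1*v^4*r^0 +
      (3/4)*u^6*p^0*v^0*r^4 +
      (17/4)*u^6*p^0*v^1*r^3 +
      (179/32)*u^6*p^0*v^2*r^2 +
      (147/64)*u^6*p^0*v^3*r^1 +
      (123/1024)*u^6*p^0*v^4*r^0) := by
    subst hp1 hr1
    ring
  rw [← sub_nonneg, key]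
  positivity

lemma poly_ineq (g w : ℝ) (hg : 1/2 ≤ g) (hg1 : g < 1) (hw : w ≤ 1)
    (h : 3*g ≤ (g+2)*w^2) (hw0 : 0 ≤ w) :
    3*(g+2)*w^2*(2*g-w)^2 ≤ g*(2*g-2+(g+2)*w^2)*(6*g-(g+2)*w^2) := by
  obtain ⟨e, rfl⟩ : ∃ e, g = 1-e := ⟨1-g, by ring⟩
  obtain ⟨s, rfl⟩ : ∃ s, w = 1-s := ⟨1-w, by ring⟩
  have he : 0 < e := by linarith
  have hs : 2*s ≤ e := by
    by_contra hcon
    push Not at hcon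
    have h1 : (1-s)^2 ≤ (1-e/2)^2 := by
      apply pow_le_pow_left₀ hw0; linarith
    have h2 : (1 - e + 2) * (1-s)^2 ≤ (1 - e + 2) * (1-e/2)^2 := by
      apply mul_le_mul_of_nonneg_left h1; linarith
    nlinarith [mul_pos he he, mul_pos he (mul_pos he he)]
  have h3 := poly_bern (2*e) (2*(s/e)) (1-2*e) (1-2*(s/e)) (by linarith)
    (by have : 0 ≤ s := by linarith
        positivity) (by linarith)
    (by have : s/e ≤ 1/2 := by rw [div_le_iff₀ he]; linarith
        linarith) rfl rfl
  have e1 : 2*e/2 = e := by ring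
  have e2 : 2*(s/e)/2*e = s := by field_simp
  rw [e1, e2] at h3
  exact h3
noncomputable def tc (w v : ℝ) : ℝ := 2 / w * max 0 (1 - 2 / w * |v|)

lemma tri_tc (y z x : ℝ) : triDens y z x = tc |y - z| (x - (y + z) / 2) := rfl

lemma tc_nonneg {w : ℝ} (hw : 0 < w) (v : ℝ) : 0 ≤ tc w v := by
  unfold tc; positivity

lemma tc_anti {w : ℝ} (hw : 0 < w) {v v' : ℝ} (h : |v| ≤ |v'|) : tc w v' ≤ tc w v := by
  unfold tc
  gcongr

lemma tc_neg (w v : ℝ) : tc w (-v) = tc w v := by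
  unfold tc; rw [abs_neg]

lemma tc_zero {w : ℝ} (hw : 0 < w) {v : ℝ} (h : w / 2 ≤ |v|) : tc w v = 0 := by
  unfold tc
  rw [max_eq_left, mul_zero]
  have : 1 ≤ 2 / w * |v| := by
    rw [div_mul_eq_mul_div, le_div_iff₀ hw]; linarith
  linarith

lemma tc_le {w : ℝ} (hw : 0 < w) (v : ℝ) : tc w v ≤ 2 / w := by
  unfold tc
  have : max 0 (1 - 2 / w * |v|) ≤ 1 := by
    apply max_le zero_le_one
    have : 0 ≤ 2 / w * |v| := by positivity
    linarith
  exact mul_le_of_le_one_right (by positivity) this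

lemma tc_cont (w : ℝ) : Continuous (tc w) := by
  unfold tc; fun_prop

lemma tc_left {w x : ℝ} (hw : 0 < w) (h0 : 0 ≤ x) (h : x ≤ w / 2) :
    tc w (x - w / 2) = 4 * x / w ^ 2 := by
  unfold tc
  rw [abs_of_nonpos (by linarith)]
  have : 1 - 2 / w * (-(x - w / 2)) = 2 * x / w := by field_simp; ring
  rw [this, max_eq_right (by positivity)]
  field_simp; ring

lemma tc_right {w x : ℝ} (hw : 0 < w) (h0 : w / 2 ≤ x) (h : x ≤ w) :
    tc w (x - w / 2) = 4 * (w - x) / w ^ 2 := by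
  have := tc_left hw (x := w - x) (by linarith) (by linarith)
  rw [← this, ← tc_neg]; congr 1; ring

lemma tc_le_line {w : ℝ} (hw : 0 < w) (u : ℝ) :
    tc w (u - w / 2) ≤ 4 / w ^ 2 * max 0 u := by
  unfold tc
  have h1 : -(u - w/2) ≤ |u - w / 2| := neg_le_abs _
  have h2 : 1 - 2 / w * |u - w/2| ≤ 2 / w * u := by
    have : 2 / w * (-(u - w/2)) ≤ 2 / w * |u - w/2| := by gcongr
    have h3 : 2 / w * (-(u - w/2)) = 1 - 2 / w * u := by field_simp; ring
    linarith
  calc 2 / w * max 0 (1 - 2 / w * |u - w/2|) ≤ 2 / w * max 0 (2 / w * u) := by gcongr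
    _ = 4 / w ^ 2 * max 0 u := by
      rw [show max 0 (2 / w * u) = 2 / w * max 0 u by
        rw [mul_max_of_nonneg _ _ (by positivity : (0:ℝ) ≤ 2 / w), mul_zero]]
      field_simp; ring

lemma tc_shift_integrable {w : ℝ} (hw : 0 < w) (c : ℝ) : Integrable (fun x => tc w (x - c)) := by
  have hc : Continuous (fun x => tc w (x - c)) := (tc_cont w).comp (by fun_prop)
  apply hc.integrable_of_hasCompactSupport
  apply HasCompactSupport.of_support_subset_isCompact (isCompact_Icc (a := c - w/2) (b := c + w/2))
  intro x hx
  by_contra hcon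
  apply hx
  apply tc_zero hw
  simp only [Set.mem_Icc, not_and_or, not_le] at hcon
  rcases hcon with h | h
  · rw [abs_of_nonpos (by linarith)]; linarith
  · rw [abs_of_nonneg (by linarith)]; linarith

lemma tc_half {w a : ℝ} (hw : 0 < w) (h0 : w / 2 ≤ a) (h : a ≤ w) :
    ∫ x in a..w, tc w (x - w / 2) = 2 * (1 - a / w) ^ 2 := by
  rw [intervalIntegral.integral_congr (g := fun x => 4 / w ^ 2 * (w - x))]
  · rw [intervalIntegral.integral_const_mul, intervalIntegral.integral_sub (by simp) (by simp)]
    simp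
    field_simp; ring
  · intro x hx
    rw [Set.uIcc_of_le h] at hx
    simp only []
    rw [tc_right hw (by linarith [hx.1]) hx.2]; ring

lemma tc_integral {w : ℝ} (hw : 0 < w) (c : ℝ) : ∫ x, tc w (x - c) = 1 := by
  have e1 : ∫ x, tc w (x - c) = ∫ x, tc w (x - w / 2) := by
    rw [integral_sub_right_eq_self (tc w), integral_sub_right_eq_self (tc w)]
  have e2 : ∫ x in (0:ℝ)..w, tc w (x - w / 2) = ∫ x, tc w (x - w / 2) := by
    rw [intervalIntegral.integral_of_le hw.le]
    apply setIntegral_eq_integral_of_forall_compl_eq_zero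
    intro x hx
    apply tc_zero hw
    simp only [Set.mem_Ioc, not_and_or, not_le, not_lt] at hx
    rcases hx with h | h
    · rw [abs_of_nonpos (by linarith)]; linarith
    · rw [abs_of_nonneg (by linarith)]; linarith
  have hc : Continuous (fun x => tc w (x - w/2)) := (tc_cont w).comp (by fun_prop)
  have e3 : ∫ x in (0:ℝ)..(w/2), tc w (x - w / 2) = ∫ x in (w/2)..w, tc w (x - w / 2) := by
    have := intervalIntegral.integral_comp_sub_left (fun x => tc w (x - w/2)) w (a := 0) (b := w/2)
    simp only [sub_zero] at this
    rw [show w - w/2 = w/2 by ring] at this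
    rw [← this]
    congr 1; ext x
    rw [← tc_neg]; congr 1; ring
  have e4 := intervalIntegral.integral_add_adjacent_intervals
    (hc.intervalIntegrable (μ := volume) 0 (w/2)) (hc.intervalIntegrable (μ := volume) (w/2) w)
  rw [e1, ← e2, ← e4, e3, tc_half hw le_rfl (by linarith)]
  field_simp; norm_num

lemma region_closed (γ : ℝ) : IsClosed (restrictedRegion γ) := by
  unfold restrictedRegion
  simp only [Set.mem_Icc]
  refine IsClosed.and ?_ (IsClosed.and ?_ ?_)
  · exact (isClosed_le (by fun_prop) (by fun_prop)).and (isClosed_le (by fun_prop) (by fun_prop))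
  · exact (isClosed_le (by fun_prop) (by fun_prop)).and (isClosed_le (by fun_prop) (by fun_prop))
  · exact isClosed_le (by fun_prop) (by fun_prop)

lemma region_compact (γ : ℝ) : IsCompact (restrictedRegion γ) := by
  apply IsCompact.of_isClosed_subset ((isCompact_Icc (a := (0:ℝ)) (b := 1)).prod
    (isCompact_Icc (a := (0:ℝ)) (b := 1))) (region_closed γ)
  intro p hp
  exact ⟨hp.1, hp.2.1⟩

lemma rep {γ : ℝ} (hγ : 0 < γ) (hγ1 : γ < 1) (G : ℝ × ℝ → ℝ) (hsym : ∀ y z, G (z, y) = G (y, z))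
    (hG : IntegrableOn G (restrictedRegion γ)) :
    IntervalIntegrable (fun w => ∫ y in (0:ℝ)..(1 - w), G (y, y + w)) volume γ 1 ∧
    ∫ p in restrictedRegion γ, G p = 2 * ∫ w in γ..1, ∫ y in (0:ℝ)..(1 - w), G (y, y + w) := by
  set A : Set (ℝ × ℝ) := {p | 0 ≤ p.1 ∧ p.1 + γ ≤ p.2 ∧ p.2 ≤ 1} with hA
  set B : Set (ℝ × ℝ) := Prod.swap ⁻¹' A with hB
  have hAB : restrictedRegion γ = A ∪ B := by
    ext ⟨y, z⟩
    simp only [restrictedRegion, hA, hB, Set.mem_setOf_eq, Set.mem_union, Set.mem_preimage, Set.mem_Icc,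
      Prod.swap_prod_mk]
    constructor
    · rintro ⟨⟨a, b⟩, ⟨c, d⟩, h⟩
      rcases le_abs.1 h with h | h
      · right; exact ⟨c, by linarith, b⟩
      · left; exact ⟨a, by linarith, d⟩
    · rintro (⟨a, b, c⟩ | ⟨a, b, c⟩)
      · exact ⟨⟨a, by linarith⟩, ⟨by linarith, c⟩, le_abs.2 (Or.inr (by linarith))⟩
      · exact ⟨⟨by linarith, c⟩, ⟨a, by linarith⟩, le_abs.2 (Or.inl (by linarith))⟩
  have hAm : MeasurableSet A := by
    apply IsClosed.measurableSet
    refine IsClosed.and ?_ (IsClosed.and ?_ ?_) <;> exact isClosed_le (by fun_prop) (by fun_prop)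
  have hBm : MeasurableSet B := measurable_swap hAm
  have hdis : Disjoint A B := by
    rw [Set.disjoint_left]
    rintro ⟨y, z⟩ ⟨_, h1, _⟩ ⟨_, h2, _⟩
    simp at h1 h2
    linarith
  have hGA : IntegrableOn G A := hG.mono_set (by rw [hAB]; exact Set.subset_union_left)
  have hGB : IntegrableOn G B := hG.mono_set (by rw [hAB]; exact Set.subset_union_right)
  have e1 : ∫ p in B, G p = ∫ p in A, G p := by
    have := (Measure.measurePreserving_swap (μ := (volume : Measure ℝ)) (ν := (volume : Measure ℝ))).setIntegral_preimage_emb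
      MeasurableEquiv.prodComm.measurableEmbedding G A
    rw [← Measure.volume_eq_prod] at this
    rw [← this]
    congr 1
    ext ⟨y, z⟩
    exact hsym z y
  have hsh := measurePreserving_prod_add (volume : Measure ℝ) (volume : Measure ℝ)
  have hemb : MeasurableEmbedding (fun z : ℝ × ℝ => (z.1, z.1 + z.2)) :=
    (MeasurableEquiv.shearAddRight ℝ).measurableEmbedding
  set A' : Set (ℝ × ℝ) := (fun z : ℝ × ℝ => (z.1, z.1 + z.2)) ⁻¹' A with hA'
  have hA'm : MeasurableSet A' := hemb.measurable hAm
  have e2 : ∫ p in A', G (p.1, p.1 + p.2) = ∫ p in A, G p := hsh.setIntegral_preimage_emb hemb G A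
  have i2 : IntegrableOn (fun p : ℝ × ℝ => G (p.1, p.1 + p.2)) A' :=
    (hsh.integrableOn_comp_preimage hemb).2 hGA
  rw [← integrable_indicator_iff hA'm] at i2
  have i3 := i2
  rw [Measure.volume_eq_prod] at i3
  have e3 := integral_prod_symm _ i3
  have i4 := i3.integral_prod_right
  have e5 : ∀ w, ∫ y, A'.indicator (fun p : ℝ × ℝ => G (p.1, p.1 + p.2)) (y, w) =
      (Set.Icc γ 1).indicator (fun w => ∫ y in (0:ℝ)..(1 - w), G (y, y + w)) w := by
    intro w
    by_cases hw : w ∈ Set.Icc γ 1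
    · rw [Set.indicator_of_mem hw, intervalIntegral.integral_of_le (by linarith [hw.2]),
        ← integral_Icc_eq_integral_Ioc, ← integral_indicator measurableSet_Icc]
      congr 1; ext y
      by_cases hy : y ∈ Set.Icc 0 (1 - w)
      · rw [Set.indicator_of_mem hy, Set.indicator_of_mem]
        refine ⟨hy.1, ?_, ?_⟩
        · simpa using hw.1
        · simp; linarith [hy.2]
      · rw [Set.indicator_of_notMem hy, Set.indicator_of_notMem]
        rintro ⟨h1, h2, h3⟩
        simp at h1 h2 h3
        exact hy ⟨h1, by linarith⟩
    · rw [Set.indicator_of_notMem hw]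
      convert integral_zero ℝ ℝ with y
      rw [Set.indicator_of_notMem]
      rintro ⟨h1, h2, h3⟩
      simp at h1 h2 h3
      exact hw ⟨by linarith, by linarith⟩
  simp_rw [e5] at e3 i4
  rw [integrable_indicator_iff measurableSet_Icc] at i4
  constructor
  · rw [intervalIntegrable_iff_integrableOn_Icc_of_le hγ1.le]
    exact i4
  · rw [hAB, setIntegral_union hdis hBm hGA hGB, e1, ← e2, ← integral_indicator hA'm,
      Measure.volume_eq_prod, e3, integral_indicator measurableSet_Icc, integral_Icc_eq_integral_Ioc,
      intervalIntegral.integral_of_le hγ1.le]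
    ring

lemma tri_meas : Measurable (fun q : ℝ × (ℝ × ℝ) => triDens q.2.1 q.2.2 q.1) := by
  unfold triDens; fun_prop

lemma region_pos {γ : ℝ} (hγ : 0 < γ) {p : ℝ × ℝ} (hp : p ∈ restrictedRegion γ) :
    0 < |p.1 - p.2| := lt_of_lt_of_le hγ hp.2.2

lemma tri_bound {γ : ℝ} (hγ : 0 < γ) {p : ℝ × ℝ} (hp : p ∈ restrictedRegion γ) (x : ℝ) :
    triDens p.1 p.2 x ≤ 2 / γ := by
  rw [tri_tc]
  refine (tc_le (region_pos hγ hp) _).trans ?_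
  have := hp.2.2
  gcongr

lemma tri_nonneg {γ : ℝ} (hγ : 0 < γ) {p : ℝ × ℝ} (hp : p ∈ restrictedRegion γ) (x : ℝ) :
    0 ≤ triDens p.1 p.2 x := by
  rw [tri_tc]; exact tc_nonneg (region_pos hγ hp) _

lemma tri_out {y z x : ℝ} (hy : y ∈ Set.Icc (0:ℝ) 1) (hz : z ∈ Set.Icc (0:ℝ) 1) (h : 0 < |y - z|)
    (hx : x ∉ Set.Ioo (0:ℝ) 1) : triDens y z x = 0 := by
  rw [tri_tc]
  apply tc_zero h
  simp only [Set.mem_Ioo, not_and_or, not_lt] at hx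
  obtain ⟨h1, h2⟩ := hy
  obtain ⟨h3, h4⟩ := hz
  rcases hx with hx | hx
  · rw [abs_of_nonpos (a := x - _) (by linarith)]
    have : |y - z| ≤ y + z := abs_le.2 ⟨by linarith, by linarith⟩
    linarith
  · rw [abs_of_nonneg (a := x - _) (by linarith)]
    have : |y - z| ≤ 2 - (y + z) := abs_le.2 ⟨by linarith, by linarith⟩
    linarith

lemma tri_intOn {γ : ℝ} (hγ : 0 < γ) (x : ℝ) :
    IntegrableOn (fun p : ℝ × ℝ => triDens p.1 p.2 x) (restrictedRegion γ) := by
  apply Measure.integrableOn_of_bounded (M := 2 / γ) (region_compact γ).measure_ne_top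
  · exact (tri_meas.comp (measurable_const.prodMk measurable_id)).aestronglyMeasurable
  · rw [ae_restrict_iff' (region_closed γ).measurableSet]
    filter_upwards with p hp
    rw [Real.norm_eq_abs, abs_of_nonneg (tri_nonneg hγ hp x)]
    exact tri_bound hγ hp x

lemma tri_shear {w : ℝ} (hw : 0 < w) (x y : ℝ) : triDens y (y + w) x = tc w (x - y - w / 2) := by
  rw [tri_tc]
  congr 1
  · rw [show y - (y + w) = -w by ring, abs_neg, abs_of_pos hw]
  · ring

lemma tri_comm (y z x : ℝ) : triDens z y x = triDens y z x := by
  rw [tri_tc, tri_tc, abs_sub_comm, add_comm]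

lemma phi_rep {γ : ℝ} (hγ : 0 < γ) (hγ1 : γ < 1) (x : ℝ) :
    IntervalIntegrable (fun w => ∫ y in (0:ℝ)..(1 - w), triDens y (y + w) x) volume γ 1 ∧
    phiGamma γ x = 2 / (1 - γ) ^ 2 * ∫ w in γ..1, ∫ y in (0:ℝ)..(1 - w), triDens y (y + w) x := by
  obtain ⟨h1, h2⟩ := rep hγ hγ1 (fun p => triDens p.1 p.2 x) (fun y z => tri_comm y z x)
    (tri_intOn hγ x)
  refine ⟨h1, ?_⟩
  unfold phiGamma
  rw [h2]
  ring

lemma phi_nonneg {γ : ℝ} (hγ : 0 < γ) (x : ℝ) : 0 ≤ phiGamma γ x := by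
  unfold phiGamma
  apply mul_nonneg (by positivity)
  exact setIntegral_nonneg (region_closed γ).measurableSet (fun p hp => tri_nonneg hγ hp x)

lemma phi_zero {γ : ℝ} (hγ : 0 < γ) {x : ℝ} (hx : x ∉ Set.Ioo (0:ℝ) 1) : phiGamma γ x = 0 := by
  unfold phiGamma
  rw [setIntegral_eq_zero_of_forall_eq_zero, mul_zero]
  intro p hp
  exact tri_out hp.1 hp.2.1 (region_pos hγ hp) hx

lemma phi_symm {γ : ℝ} (hγ : 0 < γ) (hγ1 : γ < 1) (x : ℝ) : phiGamma γ (1 - x) = phiGamma γ x := by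
  rw [(phi_rep hγ hγ1 _).2, (phi_rep hγ hγ1 _).2]
  congr 1
  apply intervalIntegral.integral_congr
  intro w hw
  rw [Set.uIcc_of_le hγ1.le] at hw
  have hw0 : 0 < w := lt_of_lt_of_le hγ hw.1
  simp only [tri_shear hw0]
  have := intervalIntegral.integral_comp_sub_left (fun y => tc w (x - y - w/2)) (1 - w) (a := 0) (b := 1 - w)
  simp only [sub_zero, sub_self] at this
  rw [← this]
  congr 1; ext y
  rw [← tc_neg]; congr 1; ring

lemma phi_mono {γ : ℝ} (hγ : 0 < γ) (hγ1 : γ < 1) {x x' : ℝ} (h : x ≤ x') (h' : x' ≤ 1 / 2) :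
    phiGamma γ x ≤ phiGamma γ x' := by
  rw [(phi_rep hγ hγ1 _).2, (phi_rep hγ hγ1 _).2]
  apply mul_le_mul_of_nonneg_left _ (by positivity)
  apply intervalIntegral.integral_mono_on hγ1.le (phi_rep hγ hγ1 _).1 (phi_rep hγ hγ1 _).1
  intro w hw
  have hw0 : 0 < w := lt_of_lt_of_le hγ hw.1
  simp only [tri_shear hw0]
  set T : ℝ → ℝ := fun u => tc w (u - w/2) with hT
  have hTc : Continuous T := (tc_cont w).comp (by fun_prop)
  have key : ∀ x, ∫ y in (0:ℝ)..(1 - w), tc w (x - y - w/2) = ∫ u in (x - (1 - w))..x, T u := by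
    intro x
    have := intervalIntegral.integral_comp_sub_left T x (a := 0) (b := 1 - w)
    rw [sub_zero] at this
    exact this
  rw [key, key]
  have hI : ∀ a b, IntervalIntegrable T volume a b := fun a b => hTc.intervalIntegrable a b
  have s1 := intervalIntegral.integral_add_adjacent_intervals (hI (x - (1-w)) x) (hI x x')
  have s2 := intervalIntegral.integral_add_adjacent_intervals (hI (x - (1-w)) (x' - (1-w))) (hI (x' - (1-w)) x')
  have s3 : ∫ u in (x - (1-w))..(x' - (1-w)), T u = ∫ u in x..x', T (u - (1-w)) := by
    rw [intervalIntegral.integral_comp_sub_right T]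
  have s4 : ∫ u in x..x', T (u - (1-w)) ≤ ∫ u in x..x', T u := by
    apply intervalIntegral.integral_mono_on h
    · exact (hTc.comp (by fun_prop : Continuous fun u : ℝ => u - (1-w))).intervalIntegrable _ _
    · exact hI _ _
    intro u hu
    apply tc_anti hw0
    rw [abs_le]
    have h1 := hu.2
    have h2 := hw.2
    rw [abs_of_nonpos (a := u - (1-w) - w/2) (by linarith)]
    constructor <;> linarith
  linarith

lemma phi_comp {γ : ℝ} (hγ : 0 < γ) (hγ1 : γ < 1) {x x' : ℝ} (h : |x' - 1/2| ≤ |x - 1/2|) :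
    phiGamma γ x ≤ phiGamma γ x' := by
  have aux : ∀ x, phiGamma γ (1/2 - |x - 1/2|) = phiGamma γ x := by
    intro x
    rcases abs_cases (x - 1/2) with ⟨h, _⟩ | ⟨h, _⟩
    · rw [h, ← phi_symm hγ hγ1 x]; congr 1; ring
    · rw [h]; congr 1; ring
  rw [← aux x, ← aux x']
  apply phi_mono hγ hγ1
  · linarith
  · linarith [abs_nonneg (x' - 1/2)]

lemma region_vol {γ : ℝ} (hγ : 0 < γ) (hγ1 : γ < 1) :
    ∫ _p in restrictedRegion γ, (1:ℝ) = (1 - γ) ^ 2 := by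
  rw [(rep hγ hγ1 (fun _ => (1:ℝ)) (fun _ _ => rfl)
    (integrableOn_const (region_compact γ).measure_ne_top)).2]
  simp only [intervalIntegral.integral_const, smul_eq_mul, mul_one, sub_zero]
  rw [intervalIntegral.integral_sub (by simp) (by simp)]
  simp
  ring

lemma tri_prod_int {γ : ℝ} (hγ : 0 < γ) :
    Integrable (fun q : ℝ × (ℝ × ℝ) => triDens q.2.1 q.2.2 q.1)
      ((volume : Measure ℝ).prod (volume.restrict (restrictedRegion γ))) := by
  haveI : IsFiniteMeasure ((volume : Measure (ℝ × ℝ)).restrict (restrictedRegion γ)) :=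
    ⟨by simpa using (region_compact γ).measure_lt_top⟩
  rw [integrable_prod_iff' tri_meas.aestronglyMeasurable]
  constructor
  · rw [ae_restrict_iff' (region_closed γ).measurableSet]
    filter_upwards with p hp
    exact tc_shift_integrable (region_pos hγ hp) _
  · apply (integrable_const (1:ℝ)).congr
    rw [Filter.EventuallyEq, ae_restrict_iff' (region_closed γ).measurableSet]
    filter_upwards with p hp
    rw [← tc_integral (region_pos hγ hp) ((p.1 + p.2) / 2)]
    congr 1; ext x
    rw [Real.norm_eq_abs, abs_of_nonneg (tri_nonneg hγ hp x)]; rfl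

lemma phi_integrable {γ : ℝ} (hγ : 0 < γ) : Integrable (phiGamma γ) := by
  haveI : IsFiniteMeasure ((volume : Measure (ℝ × ℝ)).restrict (restrictedRegion γ)) :=
    ⟨by simpa using (region_compact γ).measure_lt_top⟩
  exact (tri_prod_int hγ).integral_prod_left.const_mul _

lemma phi_integral {γ : ℝ} (hγ : 0 < γ) (hγ1 : γ < 1) : ∫ x, phiGamma γ x = 1 := by
  haveI : IsFiniteMeasure ((volume : Measure (ℝ × ℝ)).restrict (restrictedRegion γ)) :=
    ⟨by simpa using (region_compact γ).measure_lt_top⟩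
  unfold phiGamma
  have hint := tri_prod_int hγ
  have hsw : ∫ x, ∫ p in restrictedRegion γ, triDens p.1 p.2 x =
      ∫ p in restrictedRegion γ, ∫ x, triDens p.1 p.2 x := by
    rw [← integral_prod _ hint, integral_prod_symm _ hint]
  rw [integral_const_mul, hsw]
  rw [setIntegral_congr_fun (g := fun _ => (1:ℝ)) (region_closed γ).measurableSet, region_vol hγ hγ1]
  · have : (1 - γ) ^ 2 ≠ 0 := by
      have : 0 < 1 - γ := by linarith
      positivity
    exact inv_mul_cancel₀ this
  · intro p hp
    show ∫ x, tc |p.1 - p.2| (x - (p.1 + p.2) / 2) = 1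
    exact tc_integral (region_pos hγ hp) _

lemma relu_int {x t : ℝ} (hx : 0 ≤ x) (ht : 0 ≤ t) : ∫ y in (0:ℝ)..t, max 0 (x - y) ≤ x ^ 2 / 2 := by
  have hc : Continuous fun y : ℝ => max 0 (x - y) := by fun_prop
  have hlin : ∀ t, ∫ y in (0:ℝ)..t, (x - y) = x * t - t ^ 2 / 2 := by
    intro t
    rw [intervalIntegral.integral_sub (by simp) (by simp)]
    simp; ring
  have hl : ∀ t, 0 ≤ t → t ≤ x → ∫ y in (0:ℝ)..t, max 0 (x - y) = x * t - t ^ 2 / 2 := by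
    intro t h0 h1
    rw [← hlin]
    apply intervalIntegral.integral_congr
    intro y hy
    rw [Set.uIcc_of_le h0] at hy
    exact max_eq_right (by linarith [hy.2])
  rcases le_total t x with h | h
  · rw [hl t ht h]; nlinarith [sq_nonneg (x - t)]
  · rw [← intervalIntegral.integral_add_adjacent_intervals (hc.intervalIntegrable 0 x) (hc.intervalIntegrable x t),
      hl x hx le_rfl]
    have : ∫ y in x..t, max 0 (x - y) = ∫ y in x..t, (0:ℝ) := by
      apply intervalIntegral.integral_congr
      intro y hy
      rw [Set.uIcc_of_le h] at hy
      exact max_eq_left (by linarith [hy.1])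
    rw [this]; simp; nlinarith

lemma phi_quad {γ : ℝ} (hγ : 0 < γ) (hγ1 : γ < 1) {x : ℝ} (hx : 0 ≤ x) :
    phiGamma γ x ≤ 4 * x ^ 2 / (γ * (1 - γ)) := by
  have hg : 0 < 1 - γ := by linarith
  rw [(phi_rep hγ hγ1 _).2]
  have h1 : ∫ w in γ..1, ∫ y in (0:ℝ)..(1 - w), triDens y (y + w) x ≤
      ∫ w in γ..1, 2 * x ^ 2 * w ^ (-2 : ℤ) := by
    apply intervalIntegral.integral_mono_on hγ1.le (phi_rep hγ hγ1 _).1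
    · apply IntervalIntegrable.const_mul
      apply intervalIntegral.intervalIntegrable_zpow
      right; rw [Set.uIcc_of_le hγ1.le]; intro h; linarith [h.1]
    intro w hw
    have hw0 : 0 < w := lt_of_lt_of_le hγ hw.1
    simp only [tri_shear hw0]
    have h2 : ∫ y in (0:ℝ)..(1 - w), tc w (x - y - w/2) ≤ ∫ y in (0:ℝ)..(1 - w), 4 / w^2 * max 0 (x - y) := by
      apply intervalIntegral.integral_mono_on (by linarith [hw.2])
      · exact ((tc_cont w).comp (by fun_prop : Continuous fun y : ℝ => x - y - w/2)).intervalIntegrable _ _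
      · exact (by fun_prop : Continuous fun y : ℝ => 4 / w^2 * max 0 (x - y)).intervalIntegrable _ _
      intro y _
      exact tc_le_line hw0 _
    refine h2.trans ?_
    rw [intervalIntegral.integral_const_mul]
    have := relu_int hx (t := 1 - w) (by linarith [hw.2])
    calc 4 / w^2 * ∫ y in (0:ℝ)..(1 - w), max 0 (x - y) ≤ 4 / w^2 * (x^2/2) := by gcongr
      _ = 2 * x ^ 2 * w ^ (-2 : ℤ) := by
        rw [zpow_neg]; norm_cast; field_simp; ring
  have h3 : ∫ w in γ..1, 2 * x ^ 2 * w ^ (-2 : ℤ) = 2 * x ^ 2 * (1 - γ) / γ := by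
    rw [intervalIntegral.integral_const_mul, integral_zpow]
    · norm_num; field_simp; ring
    · right; refine ⟨by norm_num, ?_⟩
      rw [Set.uIcc_of_le hγ1.le]; intro h; linarith [h.1]
  rw [h3] at h1
  calc _ ≤ 2 / (1 - γ)^2 * (2 * x ^ 2 * (1 - γ) / γ) := by gcongr
    _ = _ := by field_simp; ring

lemma phi_lin {γ : ℝ} (hγ : 1 / 2 ≤ γ) (hγ1 : γ < 1) {x : ℝ} (hx : 0 ≤ x) (hx1 : x ≤ 1 / 2) :
    phiGamma γ x ≤ 4 * ((γ + 2) / (3 * γ)) * x := by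
  have hg : 0 < 1 - γ := by linarith
  have hγ0 : 0 < γ := by linarith
  rw [(phi_rep hγ0 hγ1 _).2]
  have h1 : ∫ w in γ..1, ∫ y in (0:ℝ)..(1 - w), triDens y (y + w) x ≤
      ∫ w in γ..1, 4 * x * ((1 - w) + (1 - w) ^ 2 / γ) := by
    apply intervalIntegral.integral_mono_on hγ1.le (phi_rep hγ0 hγ1 _).1
    · exact (by fun_prop : Continuous fun w : ℝ => 4 * x * ((1 - w) + (1 - w) ^ 2 / γ)).intervalIntegrable _ _
    intro w hw
    have hw0 : 0 < w := lt_of_lt_of_le hγ0 hw.1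
    simp only [tri_shear hw0]
    have h2 : ∫ y in (0:ℝ)..(1 - w), tc w (x - y - w/2) ≤ ∫ y in (0:ℝ)..(1 - w), 4 * x / w^2 * (1 - 2 * y) := by
      apply intervalIntegral.integral_mono_on (by linarith [hw.2])
      · exact ((tc_cont w).comp (by fun_prop : Continuous fun y : ℝ => x - y - w/2)).intervalIntegrable _ _
      · exact (by fun_prop : Continuous fun y : ℝ => 4 * x / w^2 * (1 - 2 * y)).intervalIntegrable _ _
      intro y hy
      refine (tc_le_line hw0 _).trans ?_
      have hy1 : y ≤ 1/2 := by linarith [hy.2, hw.1]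
      have : max 0 (x - y) ≤ x * (1 - 2 * y) := by
        apply max_le
        · apply mul_nonneg hx; linarith
        · nlinarith [hy.1]
      calc 4 / w^2 * max 0 (x - y) ≤ 4 / w^2 * (x * (1 - 2*y)) := by gcongr
        _ = _ := by ring
    refine h2.trans ?_
    rw [intervalIntegral.integral_const_mul]
    have h4 : ∫ y in (0:ℝ)..(1 - w), (1 - 2 * y) = (1 - w) * w := by
      rw [intervalIntegral.integral_sub (by simp) ((by fun_prop : Continuous fun y : ℝ => 2 * y).intervalIntegrable _ _),
        intervalIntegral.integral_const_mul]
      simp; ring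
    rw [h4]
    have h5 : 1 / w ≤ 1 + (1 - w) / γ := by
      rw [← sub_nonneg]
      have : 1 + (1 - w) / γ - 1 / w = (1 - w) * (w - γ) / (γ * w) := by field_simp; ring
      rw [this]
      have a := hw.1
      have b := hw.2
      apply div_nonneg (mul_nonneg (by linarith) (by linarith)) (by positivity)
    have h6 : 0 ≤ 1 - w := by linarith [hw.2]
    calc 4 * x / w^2 * ((1 - w) * w) = 4 * x * (1 - w) * (1 / w) := by field_simp
      _ ≤ 4 * x * (1 - w) * (1 + (1 - w) / γ) := by gcongr
      _ = _ := by ring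
  have h3 : ∫ w in γ..1, 4 * x * ((1 - w) + (1 - w) ^ 2 / γ) =
      4 * x * ((1 - γ)^2 / 2 + (1 - γ)^3 / (3 * γ)) := by
    rw [intervalIntegral.integral_const_mul]
    have := intervalIntegral.integral_comp_sub_left (fun t : ℝ => t + t ^ 2 / γ) 1 (a := γ) (b := 1)
    rw [this, intervalIntegral.integral_add (by simp) ((by fun_prop : Continuous fun y : ℝ => y^2 / γ).intervalIntegrable _ _),
      intervalIntegral.integral_div]
    simp
    left
    field_simp
    norm_num
  rw [h3] at h1
  calc _ ≤ 2 / (1 - γ)^2 * (4 * x * ((1 - γ)^2 / 2 + (1 - γ)^3 / (3 * γ))) := by gcongr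
    _ = _ := by field_simp; ring


/-- Overlap. -/
noncomputable def ov (γ w c : ℝ) : ℝ := ∫ x, min (tc w (x - c)) (phiGamma γ x)

lemma ov_int {γ w : ℝ} (hγ : 0 < γ) (hw : 0 < w) (c : ℝ) :
    Integrable (fun x => min (tc w (x - c)) (phiGamma γ x)) :=
  (tc_shift_integrable hw c).inf (phi_integrable hγ)

lemma full_int {g : ℝ → ℝ} (hg : ∀ x, x ∉ Set.Ioo (0:ℝ) 1 → g x = 0) :
    ∫ x in (0:ℝ)..1, g x = ∫ x, g x := by
  rw [intervalIntegral.integral_of_le zero_le_one]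
  apply setIntegral_eq_integral_of_forall_compl_eq_zero
  intro x hx
  apply hg
  intro h
  exact hx ⟨h.1, h.2.le⟩

lemma tv_ov {γ : ℝ} (hγ : 0 < γ) (hγ1 : γ < 1) {y z : ℝ} (hy : y ∈ Set.Icc (0 : ℝ) 1)
    (hz : z ∈ Set.Icc (0 : ℝ) 1) (hyz : γ ≤ |y - z|) :
    ∫ x in (0 : ℝ)..1, |triDens y z x - phiGamma γ x| = 2 - 2 * ov γ |y - z| ((y + z) / 2) := by
  have hw : 0 < |y - z| := lt_of_lt_of_le hγ hyz
  have hI := tc_shift_integrable hw ((y + z) / 2)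
  have hP := phi_integrable hγ
  have hO := ov_int hγ hw ((y + z) / 2)
  rw [full_int]
  · have : ∀ x, |triDens y z x - phiGamma γ x| = (tc |y - z| (x - (y + z) / 2) + phiGamma γ x) -
        2 * min (tc |y - z| (x - (y + z) / 2)) (phiGamma γ x) := by
      intro x
      rw [tri_tc]
      rcases le_total (tc |y - z| (x - (y + z) / 2)) (phiGamma γ x) with h | h
      · rw [min_eq_left h, abs_of_nonpos (by linarith)]; ring
      · rw [min_eq_right h, abs_of_nonneg (by linarith)]; ring
    simp_rw [this]
    have hA : Integrable (fun x => tc |y - z| (x - (y + z) / 2) + phiGamma γ x) := hI.add hP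
    rw [integral_sub hA (hO.const_mul 2), integral_add hI hP, integral_const_mul,
      tc_integral hw, phi_integral hγ hγ1]
    unfold ov
    ring
  · intro x hx
    rw [tri_out hy hz hw hx, phi_zero hγ hx]; simp

lemma two_point {a b p q : ℝ} (h : b ≤ a) (h' : q ≤ p) :
    min b p + min a q ≤ min a p + min b q := by
  rcases min_cases b p with h1 | h1 <;> rcases min_cases a q with h2 | h2 <;>
  rcases min_cases a p with h3 | h3 <;> rcases min_cases b q with h4 | h4 <;> linarith

lemma pair_int {F G : ℝ → ℝ} (hF : Integrable F) (hG : Integrable G) (s : ℝ)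
    (h : ∀ x, x ≤ s / 2 → F x + F (s - x) ≤ G x + G (s - x)) : ∫ x, F x ≤ ∫ x, G x := by
  have e1 := integral_sub_left_eq_self F volume s
  have e2 := integral_sub_left_eq_self G volume s
  have hF' := hF.comp_sub_left s
  have hG' := hG.comp_sub_left s
  have : ∫ x, (F x + F (s - x)) ≤ ∫ x, (G x + G (s - x)) := by
    apply integral_mono (hF.add hF') (hG.add hG')
    intro x
    rcases le_total x (s / 2) with hx | hx
    · exact h x hx
    · have := h (s - x) (by linarith)
      rw [sub_sub_cancel] at this
      show F x + F (s - x) ≤ G x + G (s - x)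
      linarith
  rw [integral_add hF hF', integral_add hG hG', e1, e2] at this
  linarith

lemma ov_symm {γ : ℝ} (hγ : 0 < γ) (hγ1 : γ < 1) (w c : ℝ) : ov γ w (1 - c) = ov γ w c := by
  unfold ov
  rw [← integral_sub_left_eq_self _ volume 1]
  congr 1
  ext x
  rw [phi_symm hγ hγ1, ← tc_neg]
  congr 2; ring

lemma ov_shift {γ w c : ℝ} (hγ : 0 < γ) (hγ1 : γ < 1) (hw : 0 < w) (hc : w / 2 ≤ c) (hc1 : c ≤ 1 / 2) :
    ov γ w (w / 2) ≤ ov γ w c := by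
  unfold ov
  apply pair_int (ov_int hγ hw _) (ov_int hγ hw _) (c + w / 2)
  intro x hx
  have e1 : tc w (c + w / 2 - x - c) = tc w (x - w / 2) := by
    rw [← tc_neg]; congr 1; ring
  have e2 : tc w (c + w / 2 - x - w / 2) = tc w (x - c) := by
    rw [← tc_neg]; congr 1; ring
  rw [e1, e2]
  have h1 : tc w (x - c) ≤ tc w (x - w / 2) := by
    apply tc_anti hw
    rw [abs_le]
    rw [abs_of_nonpos (by linarith : x - c ≤ 0)]
    constructor <;> linarith
  have h2 : phiGamma γ x ≤ phiGamma γ (c + w / 2 - x) := by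
    apply phi_comp hγ hγ1
    rw [abs_le, abs_of_nonpos (by linarith : x - 1/2 ≤ 0)]
    constructor <;> linarith
  have := two_point h1 h2
  linarith

lemma tc_wide {γ w x : ℝ} (hγ : 0 < γ) (hw : γ ≤ w) (hx : w / 2 ≤ x) :
    tc γ (x - γ / 2) ≤ tc w (x - w / 2) := by
  rcases le_total γ x with h | h
  · rw [tc_zero hγ]
    · exact tc_nonneg (by linarith) _
    · rw [abs_of_nonneg (by linarith)]; linarith
  · rw [tc_right hγ (by linarith) h, tc_right (by linarith) hx (by linarith)]
    have hw0 : 0 < w := by linarith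
    rw [div_le_div_iff₀ (by positivity) (by positivity)]
    have : 0 ≤ (w - γ) * ((w + γ) * x - w * γ) := by
      apply mul_nonneg (by linarith)
      nlinarith
    nlinarith

lemma ov_width_aux {γ w : ℝ} (hγ : 0 < γ) (hγ1 : γ < 1) (hw : γ ≤ w) (hw1 : w ≤ 1)
    (h : ∀ x, 0 ≤ x → x ≤ w / 2 → 4 * x / w ^ 2 < phiGamma γ x →
      min (tc γ (x - γ / 2)) (phiGamma γ x) + tc γ (w - x - γ / 2) ≤ 8 * x / w ^ 2) :
    ov γ γ (γ / 2) ≤ ov γ w (w / 2) := by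
  have hw0 : 0 < w := by linarith
  unfold ov
  apply pair_int (ov_int hγ hγ _) (ov_int hγ hw0 _) w
  intro x hx
  have hR : tc γ (w - x - γ / 2) ≤ tc w (w - x - w / 2) := tc_wide hγ hw (by linarith)
  have e : tc w (w - x - w / 2) = tc w (x - w / 2) := by
    rw [← tc_neg]; congr 1; ring
  rcases le_total (phiGamma γ x) (tc w (x - w / 2)) with h1 | h1
  · rw [min_eq_right h1]
    exact add_le_add (min_le_right _ _) (min_le_min_right _ hR)
  · rcases lt_or_ge x 0 with h0 | h0
    · have p0 : phiGamma γ x = 0 := phi_zero hγ (fun h => by linarith [h.1])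
      have z1 := tc_nonneg hw0 (x - w / 2)
      rw [p0]
      have : min (tc w (x - w / 2)) 0 = 0 := min_eq_right z1
      rw [this]
      exact add_le_add (min_le_right _ _) (min_le_min_right _ hR)
    · rcases h1.eq_or_lt with h2 | h2
      · rw [min_eq_right h2.ge]
        exact add_le_add (min_le_right _ _) (min_le_min_right _ hR)
      have hp : phiGamma γ x ≤ phiGamma γ (w - x) := by
        apply phi_comp hγ hγ1
        rw [abs_le, abs_of_nonpos (by linarith : x - 1/2 ≤ 0)]
        constructor <;> linarith
      rw [e, min_eq_left h1, min_eq_left (h1.trans hp)]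
      rw [tc_left hw0 h0 hx] at h2 ⊢
      have := h x h0 hx h2
      have m := min_le_left (tc γ (w - x - γ / 2)) (phiGamma γ (w - x))
      have : 8 * x / w ^ 2 = 4 * x / w ^ 2 + 4 * x / w ^ 2 := by ring
      linarith

lemma width_small {γ w : ℝ} (hγ : 0 < γ) (hγ2 : γ ≤ 1 / 2) (hw : γ ≤ w) (hw1 : w ≤ 1) :
    ov γ γ (γ / 2) ≤ ov γ w (w / 2) := by
  have hw0 : 0 < w := by linarith
  have hγ1 : γ < 1 := by linarith
  apply ov_width_aux hγ hγ1 hw hw1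
  intro x hx0 hx _
  have hq : phiGamma γ x ≤ 8 * x ^ 2 / γ := by
    refine (phi_quad hγ hγ1 hx0).trans ?_
    have : 0 < 1 - γ := by linarith
    rw [div_le_div_iff₀ (by positivity) hγ]
    have : 0 ≤ x ^ 2 * γ * (1 - 2 * γ) := by
      apply mul_nonneg (by positivity); linarith
    nlinarith
  have z : ∀ u, γ ≤ u → tc γ (u - γ / 2) = 0 := by
    intro u hu
    apply tc_zero hγ
    rw [abs_of_nonneg (by linarith)]; linarith
  rcases le_total γ x with h | h
  · rw [z x h, z (w - x) (by linarith)]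
    have := min_le_left 0 (phiGamma γ x)
    have : 0 ≤ 8 * x / w ^ 2 := by positivity
    linarith
  rcases le_or_gt γ (w - x) with h2 | h2
  · rw [z (w - x) h2]
    have h3 : 8 * x ^ 2 / γ ≤ 8 * x / w ^ 2 := by
      rw [div_le_div_iff₀ hγ (by positivity)]
      have : x * w ^ 2 ≤ γ := by
        calc x * w ^ 2 ≤ x * 1 := by
              gcongr
              nlinarith
          _ ≤ γ := by linarith
      nlinarith [mul_le_mul_of_nonneg_left this hx0]
    linarith [min_le_right (tc γ (x - γ / 2)) (phiGamma γ x)]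
  · rw [tc_right hγ (by linarith) h2.le]
    refine (add_le_add_left ((min_le_right _ _).trans hq) _).trans ?_
    have ga : 2 * γ * w ^ 2 * (w - γ) ^ 2 + (w ^ 2 - 2 * γ ^ 2) * (w - γ) + (γ - w) * w ^ 2 ≤ 0 := by
      have h5 : (w - γ) * w ^ 2 ≤ γ := by
        calc (w - γ) * w ^ 2 ≤ (w - γ) * 1 := by
              apply mul_le_mul_of_nonneg_left _ (by linarith)
              nlinarith
          _ ≤ γ := by linarith
      nlinarith [mul_le_mul_of_nonneg_left h5 (mul_nonneg hγ.le (by linarith : 0 ≤ w - γ))]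
    have gb : 2 * γ * w ^ 2 * (w / 2) ^ 2 + (w ^ 2 - 2 * γ ^ 2) * (w / 2) + (γ - w) * w ^ 2 ≤ 0 := by
      have hr : w = 2 * γ * (w / (2 * γ)) := by field_simp
      set r := w / (2 * γ) with hrd
      have r0 : 0 < r := by positivity
      have r1 : r ≤ 1 := by
        rw [hrd, div_le_one (by positivity)]; linarith
      rw [hr]
      have k1 : (r - 1) * (r ^ 2 - r + 1) ≤ 0 :=
        mul_nonpos_of_nonpos_of_nonneg (by linarith) (by nlinarith [sq_nonneg (r - 1/2)])
      have k2 : 4 * γ ^ 2 * r ^ 3 ≤ r ^ 3 := by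
        have : 4 * γ ^ 2 ≤ 1 := by nlinarith
        have : 0 < r ^ 3 := by positivity
        nlinarith
      have k3 : 4 * γ ^ 2 * r ^ 3 + 2 * r - 2 * r ^ 2 - 1 ≤ 0 := by nlinarith
      have k4 : 0 ≤ 2 * γ ^ 3 * r := by positivity
      nlinarith [mul_nonpos_of_nonpos_of_nonneg k3 k4]
    have gx : 2 * γ * w ^ 2 * x ^ 2 + (w ^ 2 - 2 * γ ^ 2) * x + (γ - w) * w ^ 2 ≤ 0 := by
      have hd : 0 < w / 2 - (w - γ) := by linarith
      have m1 := mul_nonpos_of_nonpos_of_nonneg ga (by linarith : 0 ≤ w / 2 - x)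
      have m2 := mul_nonpos_of_nonpos_of_nonneg gb (by linarith : 0 ≤ x - (w - γ))
      have m3 : 0 ≤ 2 * γ * w ^ 2 * ((x - (w - γ)) * (w / 2 - x) * (w / 2 - (w - γ))) :=
        mul_nonneg (by positivity) (mul_nonneg (mul_nonneg (by linarith) (by linarith)) hd.le)
      have m4 : (2 * γ * w ^ 2 * x ^ 2 + (w ^ 2 - 2 * γ ^ 2) * x + (γ - w) * w ^ 2) *
          (w / 2 - (w - γ)) ≤ 0 := by linarith
      exact nonpos_of_mul_nonpos_left m4 hd
    have : 8 * x / w ^ 2 - (8 * x ^ 2 / γ + 4 * (γ - (w - x)) / γ ^ 2) =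
        -4 * (2 * γ * w ^ 2 * x ^ 2 + (w ^ 2 - 2 * γ ^ 2) * x + (γ - w) * w ^ 2) / (γ ^ 2 * w ^ 2) := by
      field_simp; ring
    rw [← sub_nonneg, this]
    apply div_nonneg (by linarith) (by positivity)

lemma ov_interval {γ w : ℝ} (hγ : 0 < γ) (hw : 0 < w) :
    ov γ w (w / 2) = ∫ x in (0:ℝ)..w, min (tc w (x - w / 2)) (phiGamma γ x) := by
  unfold ov
  rw [intervalIntegral.integral_of_le hw.le]
  symm
  apply setIntegral_eq_integral_of_forall_compl_eq_zero
  intro x hx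
  have : tc w (x - w / 2) = 0 := by
    apply tc_zero hw
    simp only [Set.mem_Ioc, not_and_or, not_lt, not_le] at hx
    rcases hx with h | h
    · rw [abs_of_nonpos (by linarith)]; linarith
    · rw [abs_of_nonneg (by linarith)]; linarith
  rw [this, min_eq_left (phi_nonneg hγ x)]

lemma width_large {γ w : ℝ} (hγ2 : 1 / 2 ≤ γ) (hγ1 : γ < 1) (hw : γ ≤ w) (hw1 : w ≤ 1) :
    ov γ γ (γ / 2) ≤ ov γ w (w / 2) := by
  have hγ : 0 < γ := by linarith
  have hw0 : 0 < w := by linarith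
  set μ := (γ + 2) / (3 * γ) with hμ
  have hμ0 : 0 < μ := by positivity
  rcases le_or_gt (μ * w ^ 2) 1 with hc | hc
  · apply ov_width_aux hγ hγ1 hw hw1
    intro x hx0 hx h
    exfalso
    have h1 := phi_lin hγ2 hγ1 hx0 (by linarith)
    rw [← hμ] at h1
    have h2 : 4 * μ * x ≤ 4 * x / w ^ 2 := by
      rw [le_div_iff₀ (by positivity)]
      nlinarith [mul_le_mul_of_nonneg_left hc hx0]
    linarith
  set m := ∫ x in (0:ℝ)..(w / 2), phiGamma γ x with hm
  have hPi : ∀ a b, IntervalIntegrable (phiGamma γ) volume a b :=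
    fun a b => (phi_integrable hγ).intervalIntegrable
  have hOi : ∀ v, 0 < v → ∀ a b, IntervalIntegrable
      (fun x => min (tc v (x - v / 2)) (phiGamma γ x)) volume a b :=
    fun v hv a b => (ov_int hγ hv _).intervalIntegrable
  have i1 : ov γ γ (γ / 2) ≤ m + 2 * (1 - (w / 2) / γ) ^ 2 := by
    rw [ov_interval hγ hγ, ← tc_half hγ (by linarith : γ / 2 ≤ w / 2) (by linarith),
      ← intervalIntegral.integral_add_adjacent_intervals (hOi γ hγ 0 (w/2)) (hOi γ hγ (w/2) γ)]
    apply add_le_add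
    · exact intervalIntegral.integral_mono_on (by linarith) (hOi γ hγ _ _) (hPi _ _)
        (fun x _ => min_le_right _ _)
    · exact intervalIntegral.integral_mono_on (by linarith) (hOi γ hγ _ _)
        (tc_shift_integrable hγ _).intervalIntegrable (fun x _ => min_le_left _ _)
  have i2 : 2 * (m / (μ * w ^ 2)) ≤ ov γ w (w / 2) := by
    have l1 : m / (μ * w ^ 2) ≤ ∫ x in (0:ℝ)..(w / 2), min (tc w (x - w / 2)) (phiGamma γ x) := by
      rw [hm, ← intervalIntegral.integral_div]
      apply intervalIntegral.integral_mono_on (by linarith) ((hPi _ _).div_const _) (hOi w hw0 _ _)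
      intro x hx
      have p0 := phi_nonneg hγ x
      apply le_min
      · rw [tc_left hw0 hx.1 hx.2, div_le_div_iff₀ (by positivity) (by positivity)]
        have := phi_lin hγ2 hγ1 hx.1 (by linarith [hx.2])
        rw [← hμ] at this
        nlinarith [mul_le_mul_of_nonneg_right this (sq_nonneg w)]
      · exact div_le_self p0 hc.le
    have l2 : ∫ x in (0:ℝ)..(w / 2), min (tc w (x - w / 2)) (phiGamma γ x) ≤
        ∫ x in (w / 2)..w, min (tc w (x - w / 2)) (phiGamma γ x) := by
      have e := intervalIntegral.integral_comp_sub_left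
        (fun x => min (tc w (x - w / 2)) (phiGamma γ x)) w (a := 0) (b := w / 2)
      rw [sub_zero, (by ring : w - w / 2 = w / 2)] at e
      rw [← e]
      apply intervalIntegral.integral_mono_on (by linarith) (hOi w hw0 _ _)
      · exact ((ov_int hγ hw0 (w / 2)).comp_sub_left w).intervalIntegrable
      · intro x hx
        have e : tc w (w - x - w / 2) = tc w (x - w / 2) := by
          rw [← tc_neg]; congr 1; ring
        rw [e]
        apply min_le_min_left
        apply phi_comp hγ hγ1
        have a := hx.1
        have b := hx.2
        rw [abs_le, abs_of_nonpos (by linarith : x - 1/2 ≤ 0)]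
        constructor <;> linarith
    rw [ov_interval hγ hw0,
      ← intervalIntegral.integral_add_adjacent_intervals (hOi w hw0 0 (w/2)) (hOi w hw0 (w/2) w)]
    linarith
  have i3 : 1 / 2 - μ * (1 - w ^ 2) / 2 ≤ m := by
    have f1 : ∫ x in (0:ℝ)..1, phiGamma γ x = 1 := by
      rw [full_int (fun x hx => phi_zero hγ hx), phi_integral hγ hγ1]
    have f2 : ∫ x in (1/2 : ℝ)..1, phiGamma γ x = ∫ x in (0:ℝ)..(1/2), phiGamma γ x := by
      have e := intervalIntegral.integral_comp_sub_left (phiGamma γ) 1 (a := 0) (b := 1 / 2)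
      simp_rw [phi_symm hγ hγ1] at e
      rw [e]; norm_num
    have f3 := intervalIntegral.integral_add_adjacent_intervals (hPi 0 (1/2)) (hPi (1/2) 1)
    have f4 := intervalIntegral.integral_add_adjacent_intervals (hPi 0 (w/2)) (hPi (w/2) (1/2))
    have f5 : ∫ x in (w/2)..(1/2), phiGamma γ x ≤ ∫ x in (w/2)..(1/2), 4 * μ * x := by
      apply intervalIntegral.integral_mono_on (by linarith) (hPi _ _)
        ((by fun_prop : Continuous fun x : ℝ => 4 * μ * x).intervalIntegrable _ _)
      intro x hx
      exact phi_lin hγ2 hγ1 (by linarith [hx.1]) hx.2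
    rw [intervalIntegral.integral_const_mul, integral_id] at f5
    nlinarith
  have hμe : 3 * γ * μ = γ + 2 := by rw [hμ]; field_simp
  have hw2 : w ^ 2 ≤ 1 := by nlinarith
  have hμ2 : μ ≤ 5 / 3 := by
    rw [hμ, div_le_div_iff₀ (by positivity) (by norm_num)]; linarith
  have hs : μ * w ^ 2 < 2 := by nlinarith
  have hp := poly_ineq γ w hγ2 hγ1 hw1 (by rw [← hμe]; nlinarith) hw0.le
  have i4 : μ * w ^ 2 * (2 * γ - w) ^ 2 ≤ (1 - μ * (1 - w ^ 2)) * (2 - μ * w ^ 2) * γ ^ 2 := by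
    rw [← hμe] at hp
    have e1 : 2 * γ - 2 + 3 * γ * μ * w ^ 2 = 3 * γ * (1 - μ * (1 - w ^ 2)) := by
      linear_combination hμe
    rw [e1] at hp
    have : 0 < 9 * γ := by positivity
    apply le_of_mul_le_mul_left _ this
    linarith
  refine i1.trans (le_trans ?_ i2)
  have hD : 0 < μ * w ^ 2 := by positivity
  have i5 : μ * w ^ 2 * (2 * γ - w) ^ 2 ≤ 2 * m * (2 - μ * w ^ 2) * γ ^ 2 := by
    refine i4.trans ?_
    apply mul_le_mul_of_nonneg_right _ (sq_nonneg _)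
    apply mul_le_mul_of_nonneg_right _ (by linarith)
    linarith
  have : 2 * (m / (μ * w ^ 2)) - (m + 2 * (1 - (w / 2) / γ) ^ 2) =
      (2 * m * (2 - μ * w ^ 2) * γ ^ 2 - μ * w ^ 2 * (2 * γ - w) ^ 2) / (2 * γ ^ 2 * (μ * w ^ 2)) := by
    clear_value μ m
    field_simp; ring
  rw [← sub_nonneg, this]
  apply div_nonneg (by linarith) (by positivity)

lemma ov_main {γ w c : ℝ} (hγ : 0 < γ) (hγ1 : γ < 1) (hw : γ ≤ w) (hw1 : w ≤ 1) (hc : w / 2 ≤ c)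
    (hc1 : c ≤ 1 / 2) : ov γ γ (γ / 2) ≤ ov γ w c := by
  refine le_trans ?_ (ov_shift hγ hγ1 (by linarith) hc hc1)
  rcases le_total γ (1 / 2) with h | h
  · exact width_small hγ h hw hw1
  · exact width_large h hγ1 hw hw1

/-- Among all restricted symmetric triangular distributions with parameter `γ`, the
total variation distance to the intensity measure with density `φ_γ` is maximized by
the triangular distribution supported on `[0,γ]`, i.e. the one with endpoints `(γ,0)`. -/
theorem tv_dist_to_intensity_maximized (γ : ℝ) (hγ : γ ∈ Set.Ioo (0 : ℝ) 1)
    (y z : ℝ) (hy : y ∈ Set.Icc (0 : ℝ) 1) (hz : z ∈ Set.Icc (0 : ℝ) 1)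
    (hyz : γ ≤ |y - z|) :
    (1 / 2) * ∫ x in (0 : ℝ)..1, |triDens y z x - phiGamma γ x| ≤
      (1 / 2) * ∫ x in (0 : ℝ)..1, |triDens γ 0 x - phiGamma γ x| := by
  obtain ⟨h0, h1⟩ := hγ
  have hm : γ ≤ |γ - 0| := by rw [sub_zero]; exact le_abs_self _
  rw [tv_ov h0 h1 hy hz hyz, tv_ov h0 h1 (⟨h0.le, h1.le⟩ : γ ∈ Set.Icc (0:ℝ) 1)
    (⟨le_rfl, zero_le_one⟩ : (0:ℝ) ∈ Set.Icc (0:ℝ) 1) hm]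
  rw [sub_zero, add_zero, abs_of_pos h0]
  obtain ⟨hy0, hy1⟩ := hy
  obtain ⟨hz0, hz1⟩ := hz
  have hw1 : |y - z| ≤ 1 := by rw [abs_le]; constructor <;> linarith
  have key : ov γ γ (γ / 2) ≤ ov γ |y - z| ((y + z) / 2) := by
    rcases le_total ((y + z) / 2) (1 / 2) with h | h
    · apply ov_main h0 h1 hyz hw1 _ h
      rcases abs_cases (y - z) with ⟨e, _⟩ | ⟨e, _⟩ <;> rw [e] <;> linarith
    · rw [← ov_symm h0 h1 |y - z|]
      apply ov_main h0 h1 hyz hw1 _ (by linarith)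
      rcases abs_cases (y - z) with ⟨e, _⟩ | ⟨e, _⟩ <;> rw [e] <;> linarith
  linarith
end

section
/- Fix μ ∈ (0,1/2], ε > 0, m ∈ ℝ, a vertex v ∈ ℤ, and a bounded profile η : ℤ → ℝ such that v is ε-flat to the right: for all n ≥ 0, (1/(n+1))·∑_{u=v}^{v+n} η(u) ∈ [m−ε, m+ε]. Apply any finite sequence of elementary updates, each on some edge ⟨u,u+1⟩ with u ≥ v (so vertex v never interacts with vertex v−1), where an update on ⟨u,u+1⟩ replaces (η(u), η(u+1)) by ((1−μ)η(u)+μη(u+1), μη(u)+(1−μ)η(u+1)). Then after the update sequence, the value at vertex v still lies in [m−ε, m+ε]. -/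
/-- The elementary Deffuant-type `μ`-averaging update on the edge `⟨u, u+1⟩` of `ℤ`
for a real-valued opinion profile. -/
noncomputable def deffUpdate (μ : ℝ) (u : ℤ) (η : ℤ → ℝ) : ℤ → ℝ := fun v =>
  if v = u then (1 - μ) * η u + μ * η (u + 1)
  else if v = u + 1 then μ * η u + (1 - μ) * η (u + 1)
  else η v

theorem deff_sum (μ : ℝ) (v : ℤ) (k : ℕ) (ξ : ℤ → ℝ) (n : ℕ) :
    ∑ i ∈ Finset.range n, deffUpdate μ (v + k) ξ (v + i) =
      ∑ i ∈ Finset.range n, ξ (v + i) +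
        if n = k + 1 then μ * (ξ (v + k + 1) - ξ (v + k)) else 0 := by
  induction n with
  | zero => simp
  | succ n ih =>
    rw [Finset.sum_range_succ, Finset.sum_range_succ, ih]
    unfold deffUpdate
    rcases eq_or_ne n k with h | h
    · subst h
      simp
      ring
    · have h1 : ¬ (v + (n : ℤ) = v + k) := by omega
      have h2 : ¬ (n + 1 = k + 1) := by omega
      rw [if_neg h1, if_neg h2]
      rcases eq_or_ne n (k + 1) with h3 | h3
      · have h4 : v + (n : ℤ) = v + k + 1 := by omega
        rw [if_pos h3, if_pos h4, h4]
        ring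
      · have h4 : ¬ (v + (n : ℤ) = v + k + 1) := by omega
        rw [if_neg h3, if_neg h4]
        ring

theorem deff_step (μ : ℝ) (h0 : 0 < μ) (h1 : μ ≤ 1 / 2) (a b : ℝ) (v : ℤ) (ξ : ℤ → ℝ)
    (h : ∀ n : ℕ, n * a ≤ ∑ i ∈ Finset.range n, ξ (v + i) ∧
      ∑ i ∈ Finset.range n, ξ (v + i) ≤ n * b) (k : ℕ) (n : ℕ) :
    n * a ≤ ∑ i ∈ Finset.range n, deffUpdate μ (v + k) ξ (v + i) ∧
      ∑ i ∈ Finset.range n, deffUpdate μ (v + k) ξ (v + i) ≤ n * b := by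
  rw [deff_sum]
  split_ifs with hn
  · subst hn
    obtain ⟨p1, q1⟩ := h k
    obtain ⟨p2, q2⟩ := h (k + 1)
    obtain ⟨p3, q3⟩ := h (k + 1 + 1)
    rw [Finset.sum_range_succ, Finset.sum_range_succ] at p3 q3
    rw [Finset.sum_range_succ] at p2 q2 ⊢
    push_cast at *
    rw [← add_assoc] at p3 q3
    generalize ∑ i ∈ Finset.range k, ξ (v + i) = S at *
    have h2 : 0 ≤ 1 - 2 * μ := by linarith
    constructor
    · nlinarith [mul_le_mul_of_nonneg_left p1 h0.le, mul_le_mul_of_nonneg_left p3 h0.le,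
        mul_le_mul_of_nonneg_left p2 h2]
    · nlinarith [mul_le_mul_of_nonneg_left q1 h0.le, mul_le_mul_of_nonneg_left q3 h0.le,
        mul_le_mul_of_nonneg_left q2 h2]
  · simpa using h n

theorem deff_fold (μ : ℝ) (h0 : 0 < μ) (h1 : μ ≤ 1 / 2) (a b : ℝ) (v : ℤ) (l : List ℤ) :
    ∀ ξ : ℤ → ℝ, (∀ n : ℕ, n * a ≤ ∑ i ∈ Finset.range n, ξ (v + i) ∧
      ∑ i ∈ Finset.range n, ξ (v + i) ≤ n * b) → (∀ u ∈ l, v ≤ u) →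
      a ≤ (l.foldl (fun ξ u => deffUpdate μ u ξ) ξ) v ∧
        (l.foldl (fun ξ u => deffUpdate μ u ξ) ξ) v ≤ b := by
  induction l with
  | nil =>
    intro ξ h _
    simpa using h 1
  | cons u l ih =>
    intro ξ h hl
    rw [List.foldl_cons]
    obtain ⟨k, rfl⟩ := Int.le.dest (hl u (by simp))
    exact ih _ (deff_step μ h0 h1 a b v ξ h k) (fun w hw => hl w (by simp [hw]))

theorem sum_Icc_shift (v : ℤ) (ξ : ℤ → ℝ) (n : ℕ) :
    ∑ u ∈ Finset.Icc v (v + n), ξ u = ∑ i ∈ Finset.range (n + 1), ξ (v + i) := by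
  symm
  refine Finset.sum_bij (fun i _ => v + (i : ℤ)) ?_ ?_ ?_ ?_
  · intro i hi
    simp at hi ⊢
    omega
  · intro i _ j _ hij
    simpa using hij
  · intro u hu
    simp at hu
    exact ⟨(u - v).toNat, by simp; omega, by omega⟩
  · intros
    rfl

/-- If vertex `v` is `ε`-flat to the right with respect to a bounded profile `η` and
a finite sequence of elementary updates is applied, all on edges `⟨u,u+1⟩` with
`u ≥ v` (so vertex `v` never interacts with vertex `v−1`), then the resulting value
at vertex `v` still lies within `ε` of `m`. -/
theorem eps_flat_right_preserved (μ : ℝ) (hμ : μ ∈ Set.Ioc (0 : ℝ) (1 / 2))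
    (ε : ℝ) (hε : 0 < ε) (m : ℝ) (v : ℤ) (η : ℤ → ℝ)
    (hbdd : ∃ M : ℝ, ∀ u : ℤ, |η u| ≤ M)
    (hflat : ∀ n : ℕ, ((n : ℝ) + 1)⁻¹ * ∑ u ∈ Finset.Icc v (v + n), η u ∈
      Set.Icc (m - ε) (m + ε))
    (l : List ℤ) (hl : ∀ u ∈ l, v ≤ u) :
    (l.foldl (fun ξ u => deffUpdate μ u ξ) η) v ∈ Set.Icc (m - ε) (m + ε) := by
  refine deff_fold μ hμ.1 hμ.2 _ _ v l η ?_ hl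
  intro n
  cases n with
  | zero => simp
  | succ n =>
    obtain ⟨p, q⟩ := hflat n
    rw [sum_Icc_shift] at p q
    have hn : (0 : ℝ) < (n : ℝ) + 1 := by positivity
    rw [le_inv_mul_iff₀ hn] at p
    rw [inv_mul_le_iff₀ hn] at q
    push_cast
    exact ⟨p, q⟩
end
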